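/- arXiv:2004.04501 — 7 statements merged into one kernel-verified Lean document; each statement's English description precedes it below -/
import Mathlib

section
/- The quantity b := (2ρν / v(τ1)²) · ∫_0^{τ1} (v(τ1) − v(s))·φ(s) ds equals (νρ/α)·((4q+2)/(3q+2))·((τ1−τ0)/τ1)^{q}. -/
open MeasureTheory Real

/-!
By additivity of the integral, `v(τ1) - v(s) = ∫_s^{τ1} φ²`, so `b / (2ρν)` is the ratio of
`∫_0^{τ1} (∫_s^{τ1} φ²) φ(s) ds` to `(∫_0^{τ1} φ²)²`. The multiples of powers of `τ1 - s` are
closed under products and under `f ↦ ∫_s^{τ1} f`, so both integrals are read off from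
`φ(s) = β (τ1 - s)^q` with `β = α / (τ1 - τ0)^q`.
-/

lemma intervalIntegrable_const_sub_rpow (a b c : ℝ) {p : ℝ} (hp : -1 < p) :
    IntervalIntegrable (fun s => (c - s) ^ p) volume a b := by
  simpa only [sub_sub_cancel] using
    (intervalIntegral.intervalIntegrable_rpow' (a := c - a) (b := c - b) hp).comp_sub_left c

lemma integral_const_sub_rpow (a c : ℝ) {p : ℝ} (hp : -1 < p) :
    ∫ s in a..c, (c - s) ^ p = (c - a) ^ (p + 1) / (p + 1) := by
  rw [intervalIntegral.integral_comp_sub_left (fun x => x ^ p), integral_rpow (Or.inl hp),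
    sub_self, zero_rpow (by linarith), sub_zero]

lemma integral_sub_primitive_mul {f g v : ℝ → ℝ} {a c : ℝ} (hac : a ≤ c)
    (hg : IntervalIntegrable g volume a c) (hv : ∀ u ∈ Set.Icc a c, v u = ∫ s in a..u, g s) :
    ∫ s in a..c, (v c - v s) * f s = ∫ s in a..c, (∫ x in s..c, g x) * f s := by
  refine intervalIntegral.integral_congr_Ioo_of_le hac fun s hs => ?_
  have hs' : s ∈ Set.Icc a c := Set.Ioo_subset_Icc_self hs
  have hgs : IntervalIntegrable g volume a s :=
    hg.mono_set (Set.uIcc_subset_uIcc_left (Set.Icc_subset_uIcc hs'))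
  simp only [hv c (Set.right_mem_Icc.2 hac), hv s hs',
    intervalIntegral.integral_interval_sub_left hg hgs]

/-- `f` is a power profile on `(a, c)`: the multiple `β (c - s) ^ p` of a power of the distance to
the right endpoint `c`, as the effective-medium weight `φ` is with `c = τ1`. The interval is open,
so that for `p < 0` the value at the singularity `c` is left free. -/
def IsPowerProfile (f : ℝ → ℝ) (β p a c : ℝ) : Prop :=
  Set.EqOn f (fun s => β * (c - s) ^ p) (Set.Ioo a c)

namespace IsPowerProfile

variable {f g : ℝ → ℝ} {a c β γ p q r : ℝ}

lemma mul (hf : IsPowerProfile f β p a c) (hg : IsPowerProfile g γ r a c) :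
    IsPowerProfile (fun s => f s * g s) (β * γ) (p + r) a c := fun s hs => by
  simp only [hf hs, hg hs]
  rw [rpow_add (sub_pos.2 hs.2), mul_mul_mul_comm]

lemma sq (hf : IsPowerProfile f β q a c) :
    IsPowerProfile (fun s => f s ^ 2) (β ^ 2) (2 * q) a c := by
  simpa only [pow_two, two_mul] using hf.mul hf

lemma intervalIntegrable (hf : IsPowerProfile f β p a c) (hac : a ≤ c) (hp : -1 < p) :
    IntervalIntegrable f volume a c := by
  refine ((intervalIntegrable_const_sub_rpow a c c hp).const_mul β).congr_uIoo ?_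
  rw [Set.uIoo_of_le hac]
  exact hf.symm

lemma integral_eq (hf : IsPowerProfile f β p a c) (hac : a ≤ c) (hp : -1 < p) :
    ∫ s in a..c, f s = β / (p + 1) * (c - a) ^ (p + 1) := by
  rw [intervalIntegral.integral_congr_Ioo_of_le hac hf, intervalIntegral.integral_const_mul,
    integral_const_sub_rpow a c hp, mul_div_assoc', div_mul_eq_mul_div]

lemma integral_right (hf : IsPowerProfile f β p a c) (hp : -1 < p) :
    IsPowerProfile (fun s => ∫ x in s..c, f x) (β / (p + 1)) (p + 1) a c := fun _ hs =>
  integral_eq (hf.mono (Set.Ioo_subset_Ioo_left hs.1.le)) hs.2.le hp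

lemma integral_integral_mul (hf : IsPowerProfile f β p a c) (hg : IsPowerProfile g γ r a c)
    (hac : a ≤ c) (hp : -1 < p) (hpr : -2 < p + r) :
    ∫ s in a..c, (∫ x in s..c, f x) * g s
      = β * γ / ((p + 1) * (p + r + 2)) * (c - a) ^ (p + r + 2) := by
  rw [((hf.integral_right hp).mul hg).integral_eq hac (by linarith),
    show p + 1 + r + 1 = p + r + 2 by ring]
  field_simp

lemma integral_integral_sq_mul_div (hf : IsPowerProfile f β q a c) (hac : a < c)
    (hq : -1 / 2 < q) :
    (∫ s in a..c, (∫ x in s..c, f x ^ 2) * f s) / (∫ s in a..c, f s ^ 2) ^ 2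
      = (2 * q + 1) / (3 * q + 2) / (β * (c - a) ^ q) := by
  have hL : 0 < c - a := sub_pos.2 hac
  have : 2 * q + 1 ≠ 0 := by linarith
  have exponents : ((c - a) ^ (2 * q + 1)) ^ 2 = (c - a) ^ (3 * q + 2) * (c - a) ^ q := by
    rw [← rpow_mul_natCast hL.le, ← rpow_add hL]
    congr 1
    push_cast
    ring
  rw [hf.sq.integral_integral_mul hf hac.le (by linarith) (by linarith),
    hf.sq.integral_eq hac.le (by linarith), mul_pow, div_pow, exponents,
    show 2 * q + q + 2 = 3 * q + 2 by ring]
  field_simp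

end IsPowerProfile

lemma isPowerProfile_of_eq_mul_div_rpow {φ : ℝ → ℝ} {α q a c d : ℝ} (hd : 0 ≤ d)
    (hφ : ∀ t ∈ Set.Ioo a c, φ t = α * ((c - t) / d) ^ q) :
    IsPowerProfile φ (α / d ^ q) q a c := fun t ht => by
  rw [hφ t ht, div_rpow (sub_pos.2 ht.2).le hd, ← mul_div_assoc, mul_div_right_comm]

theorem stmt_2_general {τ0 τ1 q α : ℝ} (ν ρ : ℝ) (hτ : τ0 < τ1) (hτ1 : 0 < τ1)
    (hq : -1 / 2 < q) (hα : α ≠ 0) {φ v : ℝ → ℝ}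
    (hφ : ∀ t ∈ Set.Ioo 0 τ1, φ t = α * ((τ1 - t) / (τ1 - τ0)) ^ q)
    (hv : ∀ u ∈ Set.Icc 0 τ1, v u = ∫ s in 0..u, φ s ^ 2) :
    2 * ρ * ν / (v τ1) ^ 2 * ∫ s in 0..τ1, (v τ1 - v s) * φ s
      = ν * ρ / α * ((4 * q + 2) / (3 * q + 2)) * ((τ1 - τ0) / τ1) ^ q := by
  have hd : 0 < τ1 - τ0 := sub_pos.2 hτ
  have hprofile := isPowerProfile_of_eq_mul_div_rpow hd.le hφ
  have hsq := hprofile.sq.intervalIntegrable hτ1.le (by linarith)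
  calc 2 * ρ * ν / (v τ1) ^ 2 * ∫ s in 0..τ1, (v τ1 - v s) * φ s
      = 2 * ρ * ν * ((∫ s in 0..τ1, (∫ x in s..τ1, φ x ^ 2) * φ s)
          / (∫ s in 0..τ1, φ s ^ 2) ^ 2) := by
        rw [integral_sub_primitive_mul hτ1.le hsq hv, hv τ1 (Set.right_mem_Icc.2 hτ1.le),
          div_mul_eq_mul_div, mul_div_assoc]
    _ = 2 * ρ * ν * ((2 * q + 1) / (3 * q + 2) / (α / (τ1 - τ0) ^ q * τ1 ^ q)) := by
        rw [hprofile.integral_integral_sq_mul_div hτ1 hq, sub_zero]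
    _ = ν * ρ / α * ((4 * q + 2) / (3 * q + 2)) * ((τ1 - τ0) / τ1) ^ q := by
        rw [div_rpow hd.le hτ1.le]
        field_simp
        ring

/-- Effective-medium quantity b of Hagan et al. for the backward-looking SABR model
with τ0 ≤ 0: b = (2ρν / v(τ1)²) ∫_0^{τ1} (v(τ1) - v(s)) φ(s) ds
             = (νρ/α)((4q+2)/(3q+2))((τ1-τ0)/τ1)^q. -/
theorem stmt_2 (τ0 τ1 q α ν ρ : ℝ)
    (hτ0 : τ0 ≤ 0) (hτ1 : 0 < τ1) (hq : 0 < q) (hα : 0 < α) (hν : 0 < ν)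
    (hρ : ρ ∈ Set.Icc (-1 : ℝ) 1)
    (φ v : ℝ → ℝ)
    (hφ : ∀ t ∈ Set.Icc (0 : ℝ) τ1, φ t = α * ((τ1 - t) / (τ1 - τ0)) ^ q)
    (hv : ∀ u, v u = ∫ s in (0:ℝ)..u, (φ s) ^ 2) :
    2 * ρ * ν / (v τ1) ^ 2 * ∫ s in (0:ℝ)..τ1, (v τ1 - v s) * φ s
      = ν * ρ / α * ((4 * q + 2) / (3 * q + 2)) * ((τ1 - τ0) / τ1) ^ q :=
  stmt_2_general ν ρ (hτ0.trans_lt hτ1) hτ1 (by linarith) hα.ne'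
    (fun t ht => hφ t (Set.Ioo_subset_Icc_self ht)) (fun u _ => hv u)
end

section
/- The quantity c := (3ν²/v(τ1)³)·∫_0^{τ1}(v(τ1) − v(s))² ds + (9/v(τ1)³)·∫_0^{τ1} w(s)²·φ(s)² ds − 3b², where b = (νρ/α)·((4q+2)/(3q+2))·((τ1−τ0)/τ1)^{q}, equals (ν²/α²)·((τ1−τ0)/τ1)^{2q}·(2q+1)²·ζ. (A key intermediate simplification is that 1/(2q+1) − 2/(3q+2) + 1/(4q+3) = 2(q+1)²/((2q+1)(3q+2)(4q+3)).) -/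
open MeasureTheory Real

/-! Put `R = ((τ1 - τ0) / τ1) ^ q` and `A = φ 0 = α / R`, so that `φ t = A * (1 - t / τ1) ^ q`.
The substitution `x = 1 - t / τ1` carries every integral to one over `[0, 1]`: the tail
`v τ1 - v t` becomes a multiple of `x ^ (2 * q + 1)`, and the drift `w t` one of `1 - x ^ (q + 1)`.
Expanding `(1 - x ^ (q + 1)) ^ 2 * x ^ (2 * q)` then yields a second difference of the reciprocal
with step `q + 1`, whose factor `(q + 1) ^ 2` cancels the one in the denominator of `w ^ 2`.
The times enter the final formula only through `A`, since all powers of `τ1` cancel. -/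

theorem one_div_sub_two_div_add_one_div {K : Type*} [Field K] {a m : K} (h₀ : a ≠ 0)
    (h₁ : a + m ≠ 0) (h₂ : a + 2 * m ≠ 0) :
    1 / a - 2 / (a + m) + 1 / (a + 2 * m) = 2 * m ^ 2 / (a * (a + m) * (a + 2 * m)) := by
  field_simp
  ring

theorem integral_zero_one_rpow {r : ℝ} (hr : -1 < r) :
    ∫ x in (0 : ℝ)..1, x ^ r = 1 / (r + 1) := by
  rw [integral_rpow (Or.inl hr), one_rpow, zero_rpow (by linarith), sub_zero]

theorem integral_one_sub_rpow_sq_mul_rpow {m n : ℝ} (hn : -1 < n) (hmn : -1 < 2 * m + n) :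
    ∫ x in (0 : ℝ)..1, (1 - x ^ m) ^ 2 * x ^ n
      = 2 * m ^ 2 / ((n + 1) * (n + 1 + m) * (n + 1 + 2 * m)) := by
  have h₁ : -1 < n + m := by linarith
  have h₂ : -1 < n + 2 * m := by linarith
  have expand : Set.EqOn (fun x : ℝ ↦ (1 - x ^ m) ^ 2 * x ^ n)
      (fun x ↦ x ^ n - 2 * x ^ (n + m) + x ^ (n + 2 * m)) (Set.Ioo 0 1) := by
    intro x hx
    simp only [two_mul m, rpow_add hx.1]
    ring
  have int₀ := intervalIntegral.intervalIntegrable_rpow' (a := 0) (b := 1) hn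
  have int₁ := (intervalIntegral.intervalIntegrable_rpow' (a := 0) (b := 1) h₁).const_mul 2
  have int₂ := intervalIntegral.intervalIntegrable_rpow' (a := 0) (b := 1) h₂
  calc ∫ x in (0 : ℝ)..1, (1 - x ^ m) ^ 2 * x ^ n
      = ∫ x in (0 : ℝ)..1, (x ^ n - 2 * x ^ (n + m) + x ^ (n + 2 * m)) :=
        intervalIntegral.integral_congr_Ioo_of_le zero_le_one expand
    _ = 1 / (n + 1) - 2 / (n + 1 + m) + 1 / (n + 1 + 2 * m) := by
        rw [intervalIntegral.integral_add (int₀.sub int₁) int₂,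
          intervalIntegral.integral_sub int₀ int₁, intervalIntegral.integral_const_mul,
          integral_zero_one_rpow hn, integral_zero_one_rpow h₁, integral_zero_one_rpow h₂]
        ring
    _ = _ := one_div_sub_two_div_add_one_div (by linarith) (by linarith) (by linarith)

theorem integral_comp_one_sub_div {E : Type*} [NormedAddCommGroup E] [NormedSpace ℝ E]
    (F : ℝ → E) {T : ℝ} (hT : T ≠ 0) :
    ∫ t in (0 : ℝ)..T, F (1 - t / T) = T • ∫ x in (0 : ℝ)..1, F x := by
  rw [intervalIntegral.integral_comp_sub_div F hT, div_self hT, zero_div, sub_self, sub_zero]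

section PowerFunction

variable {f g : ℝ → ℝ} {A B T p n : ℝ}

theorem primitive_of_eqOn_one_sub_div_rpow
    (hf : Set.EqOn f (fun t ↦ A * (1 - t / T) ^ p) (Set.Ioo 0 T)) (hT : 0 < T) (hp : -1 < p)
    {u : ℝ} (hu : u ∈ Set.Icc 0 T) :
    ∫ t in (0 : ℝ)..u, f t = A * T / (p + 1) * (1 - (1 - u / T) ^ (p + 1)) := by
  rw [intervalIntegral.integral_congr_Ioo_of_le hu.1
      (hf.mono (Set.Ioo_subset_Ioo_right hu.2)), intervalIntegral.integral_const_mul,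
    intervalIntegral.integral_comp_sub_div (fun x ↦ x ^ p) hT.ne', integral_rpow (Or.inl hp),
    zero_div, sub_zero, one_rpow, smul_eq_mul]
  ring

theorem integral_of_eqOn_one_sub_div_rpow
    (hf : Set.EqOn f (fun t ↦ A * (1 - t / T) ^ p) (Set.Ioo 0 T)) (hT : 0 < T) (hp : -1 < p) :
    ∫ t in (0 : ℝ)..T, f t = A * T / (p + 1) := by
  rw [primitive_of_eqOn_one_sub_div_rpow hf hT hp (Set.right_mem_Icc.2 hT.le), div_self hT.ne',
    sub_self, zero_rpow (by linarith), sub_zero, mul_one]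

theorem integral_tail_sq_of_eqOn_one_sub_div_rpow
    (hf : Set.EqOn f (fun t ↦ A * (1 - t / T) ^ p) (Set.Ioo 0 T)) (hT : 0 < T) (hp : -1 < p) :
    ∫ s in (0 : ℝ)..T, ((∫ t in (0 : ℝ)..T, f t) - ∫ t in (0 : ℝ)..s, f t) ^ 2
      = A ^ 2 * T ^ 3 / ((p + 1) ^ 2 * (2 * p + 3)) := by
  have tail_sq : Set.EqOn (fun s ↦ ((∫ t in (0 : ℝ)..T, f t) - ∫ t in (0 : ℝ)..s, f t) ^ 2)
      (fun s ↦ (A * T / (p + 1)) ^ 2 * (1 - s / T) ^ (2 * (p + 1))) (Set.Ioo 0 T) := by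
    intro s hs
    have hx : 0 < 1 - s / T := sub_pos.2 ((div_lt_one hT).2 hs.2)
    simp only [integral_of_eqOn_one_sub_div_rpow hf hT hp,
      primitive_of_eqOn_one_sub_div_rpow hf hT hp (Set.Ioo_subset_Icc_self hs),
      two_mul (p + 1), rpow_add hx (p + 1)]
    ring
  rw [intervalIntegral.integral_congr_Ioo_of_le hT.le tail_sq,
    intervalIntegral.integral_const_mul,
    integral_comp_one_sub_div (fun x ↦ x ^ (2 * (p + 1))) hT.ne',
    integral_zero_one_rpow (by linarith), smul_eq_mul]
  have h₁ : p + 1 ≠ 0 := by linarith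
  rw [show 2 * (p + 1) + 1 = 2 * p + 3 by ring]
  field_simp

theorem integral_primitive_sq_mul_of_eqOn_one_sub_div_rpow
    (hf : Set.EqOn f (fun t ↦ A * (1 - t / T) ^ p) (Set.Ioo 0 T))
    (hg : Set.EqOn g (fun t ↦ B * (1 - t / T) ^ n) (Set.Ioo 0 T))
    (hT : 0 < T) (hp : -1 < p) (hn : -1 < n) :
    ∫ s in (0 : ℝ)..T, (∫ t in (0 : ℝ)..s, f t) ^ 2 * g s
      = 2 * A ^ 2 * B * T ^ 3 / ((n + 1) * (n + p + 2) * (n + 2 * p + 3)) := by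
  have primitive_sq_mul : Set.EqOn (fun s ↦ (∫ t in (0 : ℝ)..s, f t) ^ 2 * g s)
      (fun s ↦ (A * T / (p + 1)) ^ 2 * B
        * ((1 - (1 - s / T) ^ (p + 1)) ^ 2 * (1 - s / T) ^ n)) (Set.Ioo 0 T) := by
    intro s hs
    simp only [hg hs,
      primitive_of_eqOn_one_sub_div_rpow hf hT hp (Set.Ioo_subset_Icc_self hs)]
    ring
  rw [intervalIntegral.integral_congr_Ioo_of_le hT.le primitive_sq_mul,
    intervalIntegral.integral_const_mul,
    integral_comp_one_sub_div (fun x ↦ (1 - x ^ (p + 1)) ^ 2 * x ^ n) hT.ne',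
    integral_one_sub_rpow_sq_mul_rpow hn (by linarith), smul_eq_mul,
    show n + 1 + (p + 1) = n + p + 2 by ring, show n + 1 + 2 * (p + 1) = n + 2 * p + 3 by ring]
  have h₁ : p + 1 ≠ 0 := by linarith
  field_simp

theorem eqOn_sq_of_eqOn_one_sub_div_rpow
    (hf : Set.EqOn f (fun t ↦ A * (1 - t / T) ^ p) (Set.Ioo 0 T)) (hT : 0 < T) :
    Set.EqOn (fun t ↦ f t ^ 2) (fun t ↦ A ^ 2 * (1 - t / T) ^ (2 * p)) (Set.Ioo 0 T) := by
  intro t ht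
  have hx : 0 < 1 - t / T := sub_pos.2 ((div_lt_one hT).2 ht.2)
  simp only [hf ht, two_mul p, rpow_add hx]
  ring

theorem sabr_effective_c_of_eqOn_one_sub_div_rpow {q ν ρ : ℝ} {φ v w : ℝ → ℝ}
    (hφ : Set.EqOn φ (fun t ↦ A * (1 - t / T) ^ q) (Set.Ioo 0 T)) (hT : 0 < T)
    (hq : -(1 / 2) < q) (hA : A ≠ 0) (hv : ∀ u, v u = ∫ s in (0 : ℝ)..u, φ s ^ 2)
    (hw : ∀ u, w u = ρ * ν * ∫ s in (0 : ℝ)..u, φ s) :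
    3 * ν ^ 2 / v T ^ 3 * (∫ s in (0 : ℝ)..T, (v T - v s) ^ 2)
        + 9 / v T ^ 3 * (∫ s in (0 : ℝ)..T, w s ^ 2 * φ s ^ 2)
        - 3 * (ν * ρ / A * ((4 * q + 2) / (3 * q + 2))) ^ 2
      = ν ^ 2 / A ^ 2 * (2 * q + 1) ^ 2
        * (3 / (4 * q + 3) * (1 / (2 * q + 1) + ρ ^ 2 * (2 * q) / (3 * q + 2) ^ 2)) := by
  have h₂ : 2 * q + 1 ≠ 0 := by linarith
  have h₃ : 3 * q + 2 ≠ 0 := by linarith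
  -- `field_simp` meets `4 * q + 3` only after reordering it to this form.
  have h₄ : q * 4 + 3 ≠ 0 := by linarith
  have φ_sq := eqOn_sq_of_eqOn_one_sub_div_rpow hφ hT
  have v_end : v T = A ^ 2 * T / (2 * q + 1) := by
    rw [hv, integral_of_eqOn_one_sub_div_rpow φ_sq hT (by linarith)]
  have integral_v : ∫ s in (0 : ℝ)..T, (v T - v s) ^ 2
      = A ^ 4 * T ^ 3 / ((2 * q + 1) ^ 2 * (4 * q + 3)) := by
    simp only [hv]
    rw [integral_tail_sq_of_eqOn_one_sub_div_rpow φ_sq hT (by linarith)]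
    ring
  have integral_w : ∫ s in (0 : ℝ)..T, w s ^ 2 * φ s ^ 2
      = (ρ * ν) ^ 2 * (2 * A ^ 4 * T ^ 3 / ((2 * q + 1) * (3 * q + 2) * (4 * q + 3))) := by
    simp only [hw, mul_pow _ (∫ _ in _.._, _), mul_assoc _ (_ ^ 2),
      intervalIntegral.integral_const_mul]
    rw [integral_primitive_sq_mul_of_eqOn_one_sub_div_rpow hφ φ_sq hT (by linarith)
      (by linarith)]
    ring
  rw [integral_v, integral_w, v_end]
  field_simp
  ring

end PowerFunction

theorem sub_div_sub_rpow {τ0 τ1 t : ℝ} (q : ℝ) (hτ : τ0 < τ1) (hτ1 : 0 < τ1) (ht : t ≤ τ1) :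
    ((τ1 - t) / (τ1 - τ0)) ^ q = (1 - t / τ1) ^ q / ((τ1 - τ0) / τ1) ^ q := by
  have hD : 0 < τ1 - τ0 := sub_pos.2 hτ
  have hx : 0 ≤ 1 - t / τ1 := sub_nonneg.2 ((div_le_one hτ1).2 ht)
  rw [← div_rpow hx (div_pos hD hτ1).le, one_sub_div hτ1.ne', div_div_div_cancel_right₀ hτ1.ne']

theorem stmt_3_general (τ0 τ1 q α ν ρ ζ b : ℝ)
    (hτ : τ0 < τ1) (hτ1 : 0 < τ1) (hq : -(1 / 2) < q) (hα : α ≠ 0)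
    (hζ : ζ = 3 / (4 * q + 3) * (1 / (2 * q + 1) + ρ ^ 2 * (2 * q) / (3 * q + 2) ^ 2))
    (hb : b = ν * ρ / α * ((4 * q + 2) / (3 * q + 2)) * ((τ1 - τ0) / τ1) ^ q)
    (φ v w : ℝ → ℝ)
    (hφ : ∀ t ∈ Set.Ioo (0 : ℝ) τ1, φ t = α * ((τ1 - t) / (τ1 - τ0)) ^ q)
    (hv : ∀ u, v u = ∫ s in (0 : ℝ)..u, (φ s) ^ 2)
    (hw : ∀ u, w u = ρ * ν * ∫ s in (0 : ℝ)..u, φ s) :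
    (1 / (2 * q + 1) - 2 / (3 * q + 2) + 1 / (4 * q + 3)
        = 2 * (q + 1) ^ 2 / ((2 * q + 1) * (3 * q + 2) * (4 * q + 3)))
    ∧ (3 * ν ^ 2 / (v τ1) ^ 3 * (∫ s in (0 : ℝ)..τ1, (v τ1 - v s) ^ 2)
        + 9 / (v τ1) ^ 3 * (∫ s in (0 : ℝ)..τ1, (w s) ^ 2 * (φ s) ^ 2)
        - 3 * b ^ 2
      = ν ^ 2 / α ^ 2 * ((τ1 - τ0) / τ1) ^ (2 * q) * (2 * q + 1) ^ 2 * ζ) := by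
  refine ⟨?_, ?_⟩
  · rw [show 3 * q + 2 = 2 * q + 1 + (q + 1) by ring,
      show 4 * q + 3 = 2 * q + 1 + 2 * (q + 1) by ring]
    exact one_div_sub_two_div_add_one_div (by linarith) (by linarith) (by linarith)
  have ratio_pos : 0 < (τ1 - τ0) / τ1 := div_pos (sub_pos.2 hτ) hτ1
  have R_ne : ((τ1 - τ0) / τ1) ^ q ≠ 0 := (rpow_pos_of_pos ratio_pos q).ne'
  have R_sq : ((τ1 - τ0) / τ1) ^ (2 * q) = (((τ1 - τ0) / τ1) ^ q) ^ 2 := by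
    rw [mul_comm, rpow_mul ratio_pos.le, rpow_two]
  have φ_eqOn : Set.EqOn φ (fun t ↦ α / ((τ1 - τ0) / τ1) ^ q * (1 - t / τ1) ^ q)
      (Set.Ioo 0 τ1) := fun t ht ↦ by
    rw [hφ t ht, sub_div_sub_rpow q hτ hτ1 ht.2.le, mul_div_left_comm, mul_comm]
  have hb' : b = ν * ρ / (α / ((τ1 - τ0) / τ1) ^ q) * ((4 * q + 2) / (3 * q + 2)) := by
    rw [hb, div_div_eq_mul_div]
    ring
  rw [hb', sabr_effective_c_of_eqOn_one_sub_div_rpow φ_eqOn hτ1 hq (div_ne_zero hα R_ne) hv hw,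
    R_sq, hζ, div_pow, div_div_eq_mul_div]
  ring

/-- Effective-medium quantity c of Hagan et al. for the backward-looking SABR model
with τ0 ≤ 0, together with the key partial-fraction simplification
1/(2q+1) - 2/(3q+2) + 1/(4q+3) = 2(q+1)²/((2q+1)(3q+2)(4q+3)). -/
theorem stmt_3 (τ0 τ1 q α ν ρ ζ b : ℝ)
    (hτ0 : τ0 ≤ 0) (hτ1 : 0 < τ1) (hq : 0 < q) (hα : 0 < α) (hν : 0 < ν)
    (hρ : ρ ∈ Set.Icc (-1 : ℝ) 1)
    (hζ : ζ = 3 / (4 * q + 3) * (1 / (2 * q + 1) + ρ ^ 2 * (2 * q) / (3 * q + 2) ^ 2))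
    (hb : b = ν * ρ / α * ((4 * q + 2) / (3 * q + 2)) * ((τ1 - τ0) / τ1) ^ q)
    (φ v w : ℝ → ℝ)
    (hφ : ∀ t ∈ Set.Icc (0 : ℝ) τ1, φ t = α * ((τ1 - t) / (τ1 - τ0)) ^ q)
    (hv : ∀ u, v u = ∫ s in (0:ℝ)..u, (φ s) ^ 2)
    (hw : ∀ u, w u = ρ * ν * ∫ s in (0:ℝ)..u, φ s) :
    (1 / (2 * q + 1) - 2 / (3 * q + 2) + 1 / (4 * q + 3)
        = 2 * (q + 1) ^ 2 / ((2 * q + 1) * (3 * q + 2) * (4 * q + 3)))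
    ∧ (3 * ν ^ 2 / (v τ1) ^ 3 * (∫ s in (0:ℝ)..τ1, (v τ1 - v s) ^ 2)
        + 9 / (v τ1) ^ 3 * (∫ s in (0:ℝ)..τ1, (w s) ^ 2 * (φ s) ^ 2)
        - 3 * b ^ 2
      = ν ^ 2 / α ^ 2 * ((τ1 - τ0) / τ1) ^ (2 * q) * (2 * q + 1) ^ 2 * ζ) :=
  stmt_3_general τ0 τ1 q α ν ρ ζ b (hτ0.trans_lt hτ1) hτ1 (by linarith) hα.ne' hζ hb φ v w
    (fun t ht ↦ hφ t (Set.Ioo_subset_Icc_self ht)) hv hw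
end

section
/- Define b = (νρ/α)·((4q+2)/(3q+2))·((τ1−τ0)/τ1)^{q}, c = (ν²/α²)·((τ1−τ0)/τ1)^{2q}·(2q+1)²·ζ, Δ² = (α²/(2q+1))·(τ1/(τ1−τ0))^{2q}, and G = ν²/(Δ²(q+1)) − c. Then c > 0, and the effective SABR parameters of Theorem 1 are obtained: ν̂² := Δ²·c = ν²·ζ·(2q+1); ρ̂ := b/√c = 2ρ/(√ζ·(3q+2)); and α̂² := Δ²·exp(Δ²·G·τ1/2) = (α²/(2q+1))·(τ1/(τ1−τ0))^{2q}·exp((ν²/(q+1) − ν̂²)·τ1/2). -/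
open Real

/-!
Write `x = (τ1 - τ0) / τ1`. All effective-medium coefficients are governed by the single quantity
`a = (ν / α) x ^ q (2q + 1)`, namely
`b = 2ρ / (3q + 2) · a`, `c = a² ζ` and `Δ² = ν² (2q + 1) / a²`.
The scale `a` therefore cancels from `b / √c` and from `Δ² c`, and since
`Δ² G = ν² / (q + 1) - Δ² c` it also drops out of the exponent of `α̂²`.
-/

/-- The scale `√(c / ζ)` common to the effective-medium coefficients `b`, `c` and `Δ²`.
The argument `x` stands for the ratio `(τ1 - τ0) / τ1`. -/
noncomputable def volScale (q α ν x : ℝ) : ℝ :=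
  ν / α * x ^ q * (2 * q + 1)

section

variable {q α ν x : ℝ}

lemma volScale_pos (hq : -(1 / 2) < q) (hα : 0 < α) (hν : 0 < ν) (hx : 0 < x) :
    0 < volScale q α ν x := by
  have : 0 < 2 * q + 1 := by linarith
  unfold volScale
  positivity

lemma rpow_two_mul_eq_sq (hx : 0 ≤ x) (q : ℝ) : x ^ (2 * q) = (x ^ q) ^ 2 := by
  rw [mul_comm, rpow_mul hx, rpow_two]

lemma linear_coeff_eq_mul_volScale (q α ν x ρ : ℝ) :
    ν * ρ / α * ((4 * q + 2) / (3 * q + 2)) * x ^ q =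
      2 * ρ / (3 * q + 2) * volScale q α ν x := by
  unfold volScale
  ring

lemma quadratic_coeff_eq_volScale_sq_mul (hx : 0 ≤ x) (q α ν ζ : ℝ) :
    ν ^ 2 / α ^ 2 * x ^ (2 * q) * (2 * q + 1) ^ 2 * ζ = volScale q α ν x ^ 2 * ζ := by
  rw [rpow_two_mul_eq_sq hx, volScale]
  ring

lemma variance_eq_div_volScale_sq (hν : ν ≠ 0) (hx : 0 ≤ x) (q α : ℝ) :
    α ^ 2 / (2 * q + 1) * x⁻¹ ^ (2 * q) = ν ^ 2 * (2 * q + 1) / volScale q α ν x ^ 2 := by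
  rw [inv_rpow hx, rpow_two_mul_eq_sq hx, volScale]
  field_simp

end

lemma mul_div_sqrt_sq_mul {a : ℝ} (ha : 0 < a) (k ζ : ℝ) : k * a / √(a ^ 2 * ζ) = k / √ζ := by
  rw [sqrt_mul (sq_nonneg a), sqrt_sq ha.le, mul_comm k, mul_div_mul_left _ _ ha.ne']

lemma mul_div_mul_sub {K : Type*} [Field K] {d : K} (hd : d ≠ 0) (v p c : K) :
    d * (v / (d * p) - c) = v / p - d * c := by
  rw [mul_sub, mul_div_assoc', mul_div_mul_left _ _ hd]

lemma zeta_pos {q ρ : ℝ} (hq : -(1 / 2) < q) (hρ : ρ ∈ Set.Icc (-1 : ℝ) 1) :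
    0 < 3 / (4 * q + 3) * (1 / (2 * q + 1) + ρ ^ 2 * (2 * q) / (3 * q + 2) ^ 2) := by
  have h4 : 0 < 4 * q + 3 := by linarith
  have h2 : 0 < 2 * q + 1 := by linarith
  have h3 : 1 / 2 < 3 * q + 2 := by linarith
  have hρ_sq : ρ ^ 2 ≤ 1 := (sq_le_one_iff_abs_le_one ρ).2 (abs_le.2 hρ)
  have numerator_pos : 0 < (3 * q + 2) ^ 2 + ρ ^ 2 * (2 * q * (2 * q + 1)) := by
    have hsq : (1 / 4 : ℝ) < (3 * q + 2) ^ 2 := by nlinarith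
    have hmin : -(1 / 4) ≤ 2 * q * (2 * q + 1) := by nlinarith [sq_nonneg (4 * q + 1)]
    calc 0 < (3 * q + 2) ^ 2 + ρ ^ 2 * -(1 / 4) := by linarith
      _ ≤ (3 * q + 2) ^ 2 + ρ ^ 2 * (2 * q * (2 * q + 1)) := by gcongr
  have common_denominator : 1 / (2 * q + 1) + ρ ^ 2 * (2 * q) / (3 * q + 2) ^ 2 =
      ((3 * q + 2) ^ 2 + ρ ^ 2 * (2 * q * (2 * q + 1))) / ((2 * q + 1) * (3 * q + 2) ^ 2) := by
    rw [div_add_div _ _ h2.ne' (by positivity)]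
    ring
  rw [common_denominator]
  positivity

/-- The range `-1/2 < q` is the one in which `t ^ (2 * q)` is integrable at `0`. -/
theorem stmt_5_general (τ0 τ1 q α ν ρ ζ b c D2 G : ℝ)
    (hτ : τ0 < τ1) (hτ1 : 0 < τ1) (hq : -(1 / 2) < q) (hα : 0 < α) (hν : 0 < ν)
    (hρ : ρ ∈ Set.Icc (-1 : ℝ) 1)
    (hζ : ζ = 3 / (4 * q + 3) * (1 / (2 * q + 1) + ρ ^ 2 * (2 * q) / (3 * q + 2) ^ 2))
    (hb : b = ν * ρ / α * ((4 * q + 2) / (3 * q + 2)) * ((τ1 - τ0) / τ1) ^ q)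
    (hc : c = ν ^ 2 / α ^ 2 * ((τ1 - τ0) / τ1) ^ (2 * q) * (2 * q + 1) ^ 2 * ζ)
    (hD2 : D2 = α ^ 2 / (2 * q + 1) * (τ1 / (τ1 - τ0)) ^ (2 * q))
    (hG : G = ν ^ 2 / (D2 * (q + 1)) - c) :
    0 < c
    ∧ D2 * c = ν ^ 2 * ζ * (2 * q + 1)
    ∧ b / Real.sqrt c = 2 * ρ / (Real.sqrt ζ * (3 * q + 2))
    ∧ D2 * Real.exp (D2 * G * τ1 / 2)
        = α ^ 2 / (2 * q + 1) * (τ1 / (τ1 - τ0)) ^ (2 * q)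
            * Real.exp ((ν ^ 2 / (q + 1) - ν ^ 2 * ζ * (2 * q + 1)) * τ1 / 2) := by
  have hx : 0 < (τ1 - τ0) / τ1 := div_pos (sub_pos.2 hτ) hτ1
  have ha := volScale_pos hq hα hν hx
  set a := volScale q α ν ((τ1 - τ0) / τ1)
  have h2q : 0 < 2 * q + 1 := by linarith
  have hζ_pos : 0 < ζ := hζ ▸ zeta_pos hq hρ
  have hb_scale : b = 2 * ρ / (3 * q + 2) * a := hb.trans (linear_coeff_eq_mul_volScale ..)
  have hc_scale : c = a ^ 2 * ζ := hc.trans (quadratic_coeff_eq_volScale_sq_mul hx.le ..)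
  have hD2_scale : D2 = ν ^ 2 * (2 * q + 1) / a ^ 2 := by
    rw [hD2, ← inv_div (τ1 - τ0), variance_eq_div_volScale_sq hν.ne' hx.le]
  have hD2_ne : D2 ≠ 0 := by rw [hD2_scale]; positivity
  have hD2c : D2 * c = ν ^ 2 * ζ * (2 * q + 1) := by
    rw [hD2_scale, hc_scale]
    field_simp
  refine ⟨by rw [hc_scale]; positivity, hD2c, ?_, ?_⟩
  · rw [hb_scale, hc_scale, mul_div_sqrt_sq_mul ha, div_div, mul_comm (√ζ)]
  · rw [← hD2, hG, mul_div_mul_sub hD2_ne, hD2c]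

/-- Combining the effective-medium quantities b, c, Δ², G yields the backward-looking
effective SABR parameters of Theorem 1 of the paper (case τ0 ≤ 0):
ν̂² = Δ²c = ν²ζ(2q+1), ρ̂ = b/√c = 2ρ/(√ζ(3q+2)),
α̂² = Δ² exp(Δ²Gτ1/2) = (α²/(2q+1))(τ1/(τ1-τ0))^{2q} exp((ν²/(q+1) - ν̂²)τ1/2). -/
theorem stmt_5 (τ0 τ1 q α ν ρ ζ b c D2 G : ℝ)
    (hτ0 : τ0 ≤ 0) (hτ1 : 0 < τ1) (hq : 0 < q) (hα : 0 < α) (hν : 0 < ν)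
    (hρ : ρ ∈ Set.Icc (-1 : ℝ) 1)
    (hζ : ζ = 3 / (4 * q + 3) * (1 / (2 * q + 1) + ρ ^ 2 * (2 * q) / (3 * q + 2) ^ 2))
    (hb : b = ν * ρ / α * ((4 * q + 2) / (3 * q + 2)) * ((τ1 - τ0) / τ1) ^ q)
    (hc : c = ν ^ 2 / α ^ 2 * ((τ1 - τ0) / τ1) ^ (2 * q) * (2 * q + 1) ^ 2 * ζ)
    (hD2 : D2 = α ^ 2 / (2 * q + 1) * (τ1 / (τ1 - τ0)) ^ (2 * q))
    (hG : G = ν ^ 2 / (D2 * (q + 1)) - c) :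
    0 < c
    ∧ D2 * c = ν ^ 2 * ζ * (2 * q + 1)
    ∧ b / Real.sqrt c = 2 * ρ / (Real.sqrt ζ * (3 * q + 2))
    ∧ D2 * Real.exp (D2 * G * τ1 / 2)
        = α ^ 2 / (2 * q + 1) * (τ1 / (τ1 - τ0)) ^ (2 * q)
            * Real.exp ((ν ^ 2 / (q + 1) - ν ^ 2 * ζ * (2 * q + 1)) * τ1 / 2) :=
  stmt_5_general τ0 τ1 q α ν ρ ζ b c D2 G (hτ0.trans_lt hτ1) hτ1 (by linarith) hα hν hρ
    hζ hb hc hD2 hG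
end

section
/- The quantity b := (2ρν / v(τ1)²) · ∫_0^{τ1} (v(τ1) − v(s))·φ(s) ds equals (νρ/α)·(2q+1)·(3τ² + 2qτ0² + τ1²)/(2τ²·(3q+2)), where τ = 2qτ0 + τ1. -/
open MeasureTheory Real

/-!
Since `v τ1 - v s = ∫ x in s..τ1, φ x ^ 2`, the integral to be evaluated is the iterated integral
`∬ φ x ^ 2 * φ s` over the triangle `0 ≤ s ≤ x ≤ τ1`. Cutting `[0, τ1]` at `τ0` cuts the triangle
into two smaller triangles and a rectangle (Chen's relation). On each of the two pieces `φ` is a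
multiple of a power of the distance to the right endpoint, with exponent `0` on `[0, τ0]`, and such
functions are stable under products and under `s ↦ ∫ x in s..b, f x`.
-/

section IteratedIntegral

variable {𝕜 : Type*} [NormedDivisionRing 𝕜] [NormedAlgebra ℝ 𝕜] {μ : Measure ℝ}
  [NullSingletonClass μ] {f g : ℝ → 𝕜} {a b c : ℝ}

theorem intervalIntegrable_integral_right_mul (hf : IntervalIntegrable f μ a b)
    (hg : IntervalIntegrable g μ a b) :
    IntervalIntegrable (fun s ↦ (∫ x in s..b, f x ∂μ) * g s) μ a b :=
  hg.continuousOn_mul <| intervalIntegral.continuousOn_primitive_interval_left <|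
    (intervalIntegrable_iff' (by finiteness)).1 hf

theorem integral_integral_right_mul_add_adjacent (hfab : IntervalIntegrable f μ a b)
    (hfbc : IntervalIntegrable f μ b c) (hgab : IntervalIntegrable g μ a b)
    (hgbc : IntervalIntegrable g μ b c) :
    ∫ s in a..c, (∫ x in s..c, f x ∂μ) * g s ∂μ =
      (∫ s in a..b, (∫ x in s..b, f x ∂μ) * g s ∂μ) +
        (∫ x in b..c, f x ∂μ) * (∫ s in a..b, g s ∂μ) +
        ∫ s in b..c, (∫ x in s..c, f x ∂μ) * g s ∂μ := by
  have split : Set.EqOn (fun s ↦ (∫ x in s..c, f x ∂μ) * g s)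
      (fun s ↦ (∫ x in s..b, f x ∂μ) * g s + (∫ x in b..c, f x ∂μ) * g s) (Set.uIcc a b) := by
    intro s hs
    have hfsb : IntervalIntegrable f μ s b :=
      hfab.mono_set (Set.uIcc_subset_uIcc_right hs)
    simp only [← intervalIntegral.integral_add_adjacent_intervals hfsb hfbc, add_mul]
  have triangle := intervalIntegrable_integral_right_mul hfab hgab
  have rectangle : IntervalIntegrable (fun s ↦ (∫ x in b..c, f x ∂μ) * g s) μ a b :=
    hgab.const_mul _
  rw [← intervalIntegral.integral_add_adjacent_intervals
      ((triangle.add rectangle).congr (split.symm.mono Set.uIoc_subset_uIcc))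
      (intervalIntegrable_integral_right_mul hfbc hgbc),
    intervalIntegral.integral_congr split, intervalIntegral.integral_add triangle rectangle,
    intervalIntegral.integral_const_mul]

end IteratedIntegral

theorem intervalIntegrable_sub_div_rpow {a b c d p : ℝ} (hd : d ≠ 0) (hp : -1 < p) :
    IntervalIntegrable (fun t ↦ ((c - t) / d) ^ p) volume a b := by
  have scaled : IntervalIntegrable (fun t ↦ (t / d) ^ p) volume (c - a) (c - b) := by
    simpa [div_eq_mul_inv, hd] using
      (intervalIntegral.intervalIntegrable_rpow' (a := (c - a) / d) (b := (c - b) / d)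
        hp).comp_mul_right (c := d⁻¹)
  simpa only [sub_sub_cancel] using scaled.comp_sub_left c

theorem integral_sub_div_rpow {a b d p : ℝ} (hd : d ≠ 0) (hp : -1 < p) :
    ∫ t in a..b, ((b - t) / d) ^ p = d / (p + 1) * ((b - a) / d) ^ (p + 1) := by
  rw [intervalIntegral.integral_comp_sub_left (fun t ↦ (t / d) ^ p) b,
    intervalIntegral.integral_comp_div (fun t ↦ t ^ p) hd, integral_rpow (.inl hp), sub_self,
    zero_div, zero_rpow (by linarith), sub_zero, smul_eq_mul]
  ring

/-- `f` is the power function `t ↦ α * ((b - t) / d) ^ p` on the open interval `(a, b)`. The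
endpoint `b` is left out because `0 ^ p` is a convention for `p < 0`; the scale `d` is not tied to
`b - a`, so that `a` may be moved. -/
def IsPowerRamp (f : ℝ → ℝ) (a b d α p : ℝ) : Prop :=
  Set.EqOn f (fun t ↦ α * ((b - t) / d) ^ p) (Set.Ioo a b)

namespace IsPowerRamp

variable {f g : ℝ → ℝ} {a b d α β p q : ℝ}

theorem mul (hf : IsPowerRamp f a b d α p) (hg : IsPowerRamp g a b d β q) (hd : 0 < d) :
    IsPowerRamp (fun t ↦ f t * g t) a b d (α * β) (p + q) := by
  intro t ht
  have base_pos : 0 < (b - t) / d := div_pos (sub_pos.2 ht.2) hd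
  simp only [hf ht, hg ht, rpow_add base_pos]
  ring

theorem sq (hf : IsPowerRamp f a b d α p) (hd : 0 < d) :
    IsPowerRamp (fun t ↦ f t ^ 2) a b d (α ^ 2) (2 * p) := by
  simpa only [pow_two, two_mul] using hf.mul hf hd

theorem intervalIntegrable (hf : IsPowerRamp f a b d α p) (hab : a ≤ b) (hd : d ≠ 0)
    (hp : -1 < p) : IntervalIntegrable f volume a b := by
  rw [IsPowerRamp, ← Set.uIoo_of_le hab] at hf
  rw [intervalIntegrable_congr_uIoo hf]
  exact (intervalIntegrable_sub_div_rpow hd hp).const_mul α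

theorem integral (hf : IsPowerRamp f a b d α p) (hab : a ≤ b) (hd : d ≠ 0) (hp : -1 < p) :
    ∫ t in a..b, f t = α * d / (p + 1) * ((b - a) / d) ^ (p + 1) := by
  rw [intervalIntegral.integral_congr_Ioo_of_le hab hf, intervalIntegral.integral_const_mul,
    integral_sub_div_rpow hd hp]
  ring

theorem integral_right (hf : IsPowerRamp f a b d α p) (hd : d ≠ 0) (hp : -1 < p) :
    IsPowerRamp (fun s ↦ ∫ x in s..b, f x) a b d (α * d / (p + 1)) (p + 1) := fun s hs ↦
  have hfs : IsPowerRamp f s b d α p := hf.mono (Set.Ioo_subset_Ioo_left hs.1.le)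
  hfs.integral hs.2.le hd hp

theorem integral_integral_right_mul (hf : IsPowerRamp f a b d α p) (hg : IsPowerRamp g a b d β q)
    (hab : a ≤ b) (hd : 0 < d) (hp : -1 < p) (hpq : -2 < p + q) :
    ∫ s in a..b, (∫ x in s..b, f x) * g s =
      α * β * d ^ 2 / ((p + 1) * (p + q + 2)) * ((b - a) / d) ^ (p + q + 2) := by
  rw [((hf.integral_right hd.ne' hp).mul hg hd).integral hab hd.ne' (by linarith),
    show p + 1 + q + 1 = p + q + 2 by ring]
  field

end IsPowerRamp

/-- The effective-medium weight `φ` of the backward-looking model, up to its values at `0`, `a` and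
`b`: the constant `α` on `(0, a)`, written as a power ramp of exponent `0` and scale `1`, followed
by the power ramp of exponent `q` that starts from `α` at `a`. -/
structure IsPlateauRamp (φ : ℝ → ℝ) (a b α q : ℝ) : Prop where
  plateau : IsPowerRamp φ 0 a 1 α 0
  ramp : IsPowerRamp φ a b (b - a) α q

namespace IsPlateauRamp

variable {φ : ℝ → ℝ} {a b α q : ℝ}

theorem intervalIntegrable_sq_plateau (h : IsPlateauRamp φ a b α q) (ha : 0 ≤ a) :
    IntervalIntegrable (fun s ↦ φ s ^ 2) volume 0 a :=
  (h.plateau.sq one_pos).intervalIntegrable ha one_ne_zero (by norm_num)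

theorem intervalIntegrable_sq_ramp (h : IsPlateauRamp φ a b α q) (hab : a < b) (hq : -1 / 2 < q) :
    IntervalIntegrable (fun s ↦ φ s ^ 2) volume a b :=
  have scale_pos : 0 < b - a := sub_pos.2 hab
  (h.ramp.sq scale_pos).intervalIntegrable hab.le scale_pos.ne' (by linarith)

theorem integral_sq_ramp (h : IsPlateauRamp φ a b α q) (hab : a < b) (hq : -1 / 2 < q) :
    ∫ s in a..b, φ s ^ 2 = α ^ 2 * (b - a) / (2 * q + 1) := by
  have scale_pos : 0 < b - a := sub_pos.2 hab
  rw [(h.ramp.sq scale_pos).integral hab.le scale_pos.ne' (by linarith), div_self scale_pos.ne',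
    one_rpow, mul_one]

theorem integral_sq (h : IsPlateauRamp φ a b α q) (ha : 0 ≤ a) (hab : a < b) (hq : -1 / 2 < q) :
    ∫ s in 0..b, φ s ^ 2 = α ^ 2 * (2 * q * a + b) / (2 * q + 1) := by
  have plateau_part : ∫ s in 0..a, φ s ^ 2 = α ^ 2 * a := by
    simpa using (h.plateau.sq one_pos).integral ha one_ne_zero (by norm_num)
  have : 2 * q + 1 ≠ 0 := by linarith
  rw [← intervalIntegral.integral_add_adjacent_intervals (h.intervalIntegrable_sq_plateau ha)
    (h.intervalIntegrable_sq_ramp hab hq), plateau_part, h.integral_sq_ramp hab hq]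
  field

theorem integral_integral_sq_mul (h : IsPlateauRamp φ a b α q) (ha : 0 ≤ a) (hab : a < b)
    (hq : -1 / 2 < q) :
    ∫ s in 0..b, (∫ x in s..b, φ x ^ 2) * φ s =
      α ^ 3 * (3 * (2 * q * a + b) ^ 2 + 2 * q * a ^ 2 + b ^ 2) /
        (4 * (2 * q + 1) * (3 * q + 2)) := by
  have scale_pos : 0 < b - a := sub_pos.2 hab
  have plateau_triangle : ∫ s in 0..a, (∫ x in s..a, φ x ^ 2) * φ s = α ^ 3 * (a ^ 2 / 2) := by
    rw [(h.plateau.sq one_pos).integral_integral_right_mul h.plateau ha one_pos (by norm_num)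
      (by norm_num)]
    norm_num
    ring
  have plateau_side : ∫ s in 0..a, φ s = α * a := by
    simpa using h.plateau.integral ha one_ne_zero (by norm_num)
  have ramp_triangle : ∫ s in a..b, (∫ x in s..b, φ x ^ 2) * φ s =
      α ^ 3 * ((b - a) ^ 2 / ((2 * q + 1) * (3 * q + 2))) := by
    rw [(h.ramp.sq scale_pos).integral_integral_right_mul h.ramp hab.le scale_pos (by linarith)
      (by linarith), div_self scale_pos.ne', one_rpow]
    ring
  rw [integral_integral_right_mul_add_adjacent (h.intervalIntegrable_sq_plateau ha)
    (h.intervalIntegrable_sq_ramp hab hq)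
    (h.plateau.intervalIntegrable ha one_ne_zero (by norm_num))
    (h.ramp.intervalIntegrable hab.le scale_pos.ne' (by linarith)),
    plateau_triangle, plateau_side, ramp_triangle, h.integral_sq_ramp hab hq]
  have : 2 * q + 1 ≠ 0 := by linarith
  have : q * 3 + 2 ≠ 0 := by linarith
  field

end IsPlateauRamp

theorem stmt_8_general (τ0 τ1 q α ν ρ τ : ℝ)
    (hτ0 : 0 ≤ τ0) (hτ01 : τ0 < τ1) (hq : -1 / 2 < q) (hα : α ≠ 0)
    (hτ : τ = 2 * q * τ0 + τ1)
    (φ v : ℝ → ℝ)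
    (hφ1 : ∀ t ∈ Set.Ioo (0 : ℝ) τ0, φ t = α)
    (hφ2 : ∀ t ∈ Set.Ioo τ0 τ1, φ t = α * ((τ1 - t) / (τ1 - τ0)) ^ q)
    (hv : ∀ u, v u = ∫ s in (0 : ℝ)..u, φ s ^ 2) :
    2 * ρ * ν / v τ1 ^ 2 * ∫ s in (0 : ℝ)..τ1, (v τ1 - v s) * φ s =
      ν * ρ / α * (2 * q + 1) * (3 * τ ^ 2 + 2 * q * τ0 ^ 2 + τ1 ^ 2) /
        (2 * τ ^ 2 * (3 * q + 2)) := by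
  have h : IsPlateauRamp φ τ0 τ1 α q := ⟨fun t ht ↦ by simp [hφ1 t ht], hφ2⟩
  have hint : IntervalIntegrable (fun s ↦ φ s ^ 2) volume 0 τ1 :=
    (h.intervalIntegrable_sq_plateau hτ0).trans (h.intervalIntegrable_sq_ramp hτ01 hq)
  have tail : Set.EqOn (fun s ↦ (v τ1 - v s) * φ s) (fun s ↦ (∫ x in s..τ1, φ x ^ 2) * φ s)
      (Set.uIcc 0 τ1) := fun s hs ↦ by
    simp only [hv, intervalIntegral.integral_interval_sub_left hint
      (hint.mono_set (Set.uIcc_subset_uIcc_left hs))]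
  have hτ_pos : 0 < τ := by nlinarith
  have : 2 * q + 1 ≠ 0 := by linarith
  rw [intervalIntegral.integral_congr tail, h.integral_integral_sq_mul hτ0 hτ01 hq, hv,
    h.integral_sq hτ0 hτ01 hq, ← hτ]
  field

/-- Effective-medium quantity b of Hagan et al. for the backward-looking SABR model
with τ0 ≥ 0: b = (2ρν / v(τ1)²) ∫_0^{τ1} (v(τ1) - v(s)) φ(s) ds
             = (νρ/α)(2q+1)(3τ² + 2qτ0² + τ1²)/(2τ²(3q+2)), where τ = 2qτ0 + τ1. -/
theorem stmt_8 (τ0 τ1 q α ν ρ τ : ℝ)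
    (hτ0 : 0 ≤ τ0) (hτ01 : τ0 < τ1) (hq : 0 < q) (hα : 0 < α) (hν : 0 < ν)
    (hρ : ρ ∈ Set.Icc (-1 : ℝ) 1)
    (hτ : τ = 2 * q * τ0 + τ1)
    (φ v : ℝ → ℝ)
    (hφ1 : ∀ t ∈ Set.Icc (0 : ℝ) τ0, φ t = α)
    (hφ2 : ∀ t ∈ Set.Icc τ0 τ1, φ t = α * ((τ1 - t) / (τ1 - τ0)) ^ q)
    (hv : ∀ u, v u = ∫ s in (0:ℝ)..u, (φ s) ^ 2) :
    2 * ρ * ν / (v τ1) ^ 2 * ∫ s in (0:ℝ)..τ1, (v τ1 - v s) * φ s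
      = ν * ρ / α * (2 * q + 1) * (3 * τ ^ 2 + 2 * q * τ0 ^ 2 + τ1 ^ 2)
          / (2 * τ ^ 2 * (3 * q + 2)) :=
  stmt_8_general τ0 τ1 q α ν ρ τ hτ0 hτ01 (by linarith) hα.ne' hτ φ v
    (fun t ht ↦ hφ1 t (Set.Ioo_subset_Icc_self ht))
    (fun t ht ↦ hφ2 t (Set.Ioo_subset_Icc_self ht)) hv
end

section
/- The quantity c := (3ν²/v(τ1)³)·∫_0^{τ1}(v(τ1) − v(s))² ds + (9/v(τ1)³)·∫_0^{τ1} w(s)²·φ(s)² ds − 3b², where b = (νρ/α)·(2q+1)·(3τ² + 2qτ0² + τ1²)/(2τ²·(3q+2)), equals (ν²/α²)·γ·(2q+1)²/τ⁴. -/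
open MeasureTheory Real

/-!
On `[τ0, τ1]` the functions `φ` and `φ ^ 2` are powers of the remaining fraction
`x = (τ1 - t) / (τ1 - τ0)`, so there `v τ1 - v s` is a multiple of `x ^ (2 * q + 1)` and `w s` is
affine in `x ^ (q + 1)`. Substituting `x` for time turns the two integrals in `c` into integrals of
powers over `[0, 1]`, while `[0, τ0]` contributes polynomials in `τ0`. Since
`v τ1 = α ^ 2 * τ / (2 * q + 1)`, the coefficients of `ν ^ 2` and `ρ ^ 2 * ν ^ 2` in `c` are then
rational functions of `α`, `q`, `τ0`, `τ1`, and they match the two summands of `γ`.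
-/

section PowerIntegrals

lemma integral_rpow_zero_left {p : ℝ} (hp : -1 < p) (y : ℝ) :
    ∫ x in (0 : ℝ)..y, x ^ p = y ^ (p + 1) / (p + 1) := by
  rw [integral_rpow (Or.inl hp), zero_rpow (by linarith), sub_zero]

lemma integral_comp_sub_div_terminal (g : ℝ → ℝ) {b d : ℝ} (hd : d ≠ 0) (s : ℝ) :
    ∫ t in s..b, g ((b - t) / d) = d * ∫ x in (0 : ℝ)..(b - s) / d, g x := by
  simp only [sub_div, intervalIntegral.integral_comp_sub_div g hd, sub_self, smul_eq_mul]

lemma intervalIntegrable_comp_sub_div_terminal {g : ℝ → ℝ} {b d s : ℝ} (hd : d ≠ 0)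
    (hg : IntervalIntegrable g volume 0 ((b - s) / d)) :
    IntervalIntegrable (fun t => g ((b - t) / d)) volume s b := by
  have hscaled : IntervalIntegrable (fun t => g (t / d)) volume 0 (b - s) := by
    simpa only [div_inv_eq_mul, zero_mul, div_mul_cancel₀ _ hd, ← div_eq_mul_inv]
      using hg.comp_mul_right (c := d⁻¹)
  simpa only [sub_zero, sub_sub_cancel] using (hscaled.comp_sub_left b).symm

lemma integral_eq_add_of_eqOn_Ioo {f g₁ g₂ : ℝ → ℝ} {a c b : ℝ} (hac : a ≤ c) (hcb : c ≤ b)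
    (hg₁ : IntervalIntegrable g₁ volume a c) (hg₂ : IntervalIntegrable g₂ volume c b)
    (h₁ : Set.EqOn f g₁ (Set.Ioo a c)) (h₂ : Set.EqOn f g₂ (Set.Ioo c b)) :
    ∫ t in a..b, f t = (∫ t in a..c, g₁ t) + ∫ t in c..b, g₂ t := by
  rw [← Set.uIoo_of_le hac] at h₁
  rw [← Set.uIoo_of_le hcb] at h₂
  rw [← intervalIntegral.integral_add_adjacent_intervals (hg₁.congr_uIoo h₁.symm)
      (hg₂.congr_uIoo h₂.symm),
    intervalIntegral.integral_congr_uIoo h₁, intervalIntegral.integral_congr_uIoo h₂]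

lemma integral_eq_add_mul_integral_zero_one {f g₁ g₂ : ℝ → ℝ} {a c b : ℝ} (hac : a ≤ c)
    (hcb : c < b) (hg₁ : IntervalIntegrable g₁ volume a c)
    (hg₂ : IntervalIntegrable g₂ volume 0 1) (h₁ : Set.EqOn f g₁ (Set.Ioo a c))
    (h₂ : Set.EqOn f (fun t => g₂ ((b - t) / (b - c))) (Set.Ioo c b)) :
    ∫ t in a..b, f t = (∫ t in a..c, g₁ t) + (b - c) * ∫ x in (0 : ℝ)..1, g₂ x := by
  have hd : b - c ≠ 0 := (sub_pos.2 hcb).ne'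
  rw [← div_self hd] at hg₂ ⊢
  rw [integral_eq_add_of_eqOn_Ioo hac hcb.le hg₁
    (intervalIntegrable_comp_sub_div_terminal hd hg₂) h₁ h₂, integral_comp_sub_div_terminal g₂ hd]

lemma intervalIntegrable_sq_sub_rpow_mul_rpow {m r : ℝ} (hm : 0 ≤ m) (hr : -1 < r)
    (A B a b : ℝ) :
    IntervalIntegrable (fun x : ℝ => (A - B * x ^ m) ^ 2 * x ^ r) volume a b :=
  (intervalIntegral.intervalIntegrable_rpow' hr).continuousOn_mul
    ((continuous_const.sub (continuous_const.mul (continuous_rpow_const hm))).pow 2).continuousOn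

lemma integral_sq_sub_rpow_mul_rpow {m r : ℝ} (hm : 0 ≤ m) (hr : -1 < r) (A B : ℝ) :
    ∫ x in (0 : ℝ)..1, (A - B * x ^ m) ^ 2 * x ^ r
      = A ^ 2 / (r + 1) - 2 * A * B / (m + r + 1) + B ^ 2 / (2 * m + r + 1) := by
  have hexpand : Set.EqOn (fun x : ℝ => (A - B * x ^ m) ^ 2 * x ^ r)
      (fun x => A ^ 2 * x ^ r - 2 * A * B * x ^ (m + r) + B ^ 2 * x ^ (2 * m + r))
      (Set.Ioo 0 1) := fun x hx => by
    simp only [two_mul m, rpow_add hx.1]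
    ring
  have hint : ∀ C p : ℝ, -1 < p → IntervalIntegrable (fun x : ℝ => C * x ^ p) volume 0 1 :=
    fun C p hp => (intervalIntegral.intervalIntegrable_rpow' hp).const_mul C
  rw [intervalIntegral.integral_congr_Ioo_of_le zero_le_one hexpand,
    intervalIntegral.integral_add
      ((hint _ _ hr).sub (hint _ _ (by linarith))) (hint _ _ (by linarith)),
    intervalIntegral.integral_sub (hint _ _ hr) (hint _ _ (by linarith))]
  simp only [intervalIntegral.integral_const_mul]
  rw [integral_rpow_zero_left hr, integral_rpow_zero_left (by linarith),
    integral_rpow_zero_left (by linarith)]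
  simp only [one_rpow, mul_one_div]

end PowerIntegrals

/-- `f` equals `k` on `[0, c]` and then decays to time `b` like the power `p` of the remaining
fraction of `[c, b]`. For the backward-looking SABR model this is the shape of `φ`, with `p = q`,
and of `φ ^ 2`, with `p = 2 * q`. Nothing is said about `f` outside `[0, b]`. -/
structure IsPlateauDecay (c b p k : ℝ) (f : ℝ → ℝ) : Prop where
  eq_const : ∀ t ∈ Set.Icc 0 c, f t = k
  eq_rpow : ∀ t ∈ Set.Icc c b, f t = k * ((b - t) / (b - c)) ^ p

namespace IsPlateauDecay

variable {c b p k r l s : ℝ} {f g : ℝ → ℝ}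

lemma sq (h : IsPlateauDecay c b p k f) :
    IsPlateauDecay c b (2 * p) (k ^ 2) (fun t => f t ^ 2) where
  eq_const t ht := by rw [h.eq_const t ht]
  eq_rpow t ht := by
    have hx : 0 ≤ (b - t) / (b - c) :=
      div_nonneg (sub_nonneg.2 ht.2) (sub_nonneg.2 (ht.1.trans ht.2))
    rw [h.eq_rpow t ht, mul_pow, mul_comm 2 p, rpow_mul hx, rpow_two]

lemma integral_zero_left (h : IsPlateauDecay c b p k f) (hs : s ∈ Set.Icc 0 c) :
    ∫ t in (0 : ℝ)..s, f t = k * s := by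
  have hconst : Set.EqOn f (fun _ => k) (Set.uIcc 0 s) := by
    rw [Set.uIcc_of_le hs.1]
    exact fun t ht => h.eq_const t ⟨ht.1, ht.2.trans hs.2⟩
  rw [intervalIntegral.integral_congr hconst, intervalIntegral.integral_const, smul_eq_mul,
    sub_zero, mul_comm]

lemma integral_right (h : IsPlateauDecay c b p k f) (hcb : c < b) (hp : -1 < p)
    (hs : s ∈ Set.Icc c b) :
    ∫ t in s..b, f t = k * ((b - c) / (p + 1)) * ((b - s) / (b - c)) ^ (p + 1) := by
  have hrpow : Set.EqOn f (fun t => k * ((b - t) / (b - c)) ^ p) (Set.uIcc s b) := by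
    rw [Set.uIcc_of_le hs.2]
    exact fun t ht => h.eq_rpow t ⟨hs.1.trans ht.1, ht.2⟩
  rw [intervalIntegral.integral_congr hrpow, intervalIntegral.integral_const_mul,
    integral_comp_sub_div_terminal (· ^ p) (sub_pos.2 hcb).ne', integral_rpow_zero_left hp]
  ring

lemma intervalIntegrable (h : IsPlateauDecay c b p k f) (hc : 0 ≤ c) (hcb : c < b)
    (hp : -1 < p) : IntervalIntegrable f volume 0 b := by
  have hleft : IntervalIntegrable f volume 0 c :=
    intervalIntegrable_const.congr_uIoo fun t ht => by
      rw [Set.uIoo_of_le hc] at ht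
      exact (h.eq_const t (Set.Ioo_subset_Icc_self ht)).symm
  have hright : IntervalIntegrable f volume c b :=
    ((intervalIntegrable_comp_sub_div_terminal (sub_pos.2 hcb).ne'
      (intervalIntegral.intervalIntegrable_rpow' hp)).const_mul k).congr_uIoo fun t ht => by
        rw [Set.uIoo_of_le hcb.le] at ht
        exact (h.eq_rpow t (Set.Ioo_subset_Icc_self ht)).symm
  exact hleft.trans hright

lemma integral_add_integral (h : IsPlateauDecay c b p k f) (hc : 0 ≤ c) (hcb : c < b)
    (hp : -1 < p) (hs : s ∈ Set.Icc 0 b) :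
    (∫ t in (0 : ℝ)..s, f t) + ∫ t in s..b, f t = ∫ t in (0 : ℝ)..b, f t := by
  have hint := h.intervalIntegrable hc hcb hp
  rw [← Set.uIcc_of_le (hc.trans hcb.le)] at hs
  exact intervalIntegral.integral_add_adjacent_intervals
    (hint.mono_set (Set.uIcc_subset_uIcc_left hs)) (hint.mono_set (Set.uIcc_subset_uIcc_right hs))

lemma integral_eq (h : IsPlateauDecay c b p k f) (hc : 0 ≤ c) (hcb : c < b) (hp : -1 < p) :
    ∫ t in (0 : ℝ)..b, f t = k * (c + (b - c) / (p + 1)) := by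
  rw [← h.integral_add_integral hc hcb hp ⟨hc, hcb.le⟩, h.integral_zero_left ⟨hc, le_rfl⟩,
    h.integral_right hcb hp ⟨le_rfl, hcb.le⟩, div_self (sub_pos.2 hcb).ne', one_rpow]
  ring

lemma integral_sq_integral_right (h : IsPlateauDecay c b p k f) (hc : 0 ≤ c) (hcb : c < b)
    (hp : -1 < p) :
    ∫ s in (0 : ℝ)..b, (∫ t in s..b, f t) ^ 2
      = k ^ 2 * (((c + (b - c) / (p + 1)) ^ 3 - ((b - c) / (p + 1)) ^ 3) / 3
          + (b - c) * (((b - c) / (p + 1)) ^ 2 / (2 * p + 3))) := by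
  set M := (b - c) / (p + 1)
  have hplateau : Set.EqOn (fun s => (∫ t in s..b, f t) ^ 2)
      (fun s => k ^ 2 * (c + M - s) ^ 2) (Set.Ioo 0 c) := fun s hs => by
    have htotal := h.integral_add_integral hc hcb hp ⟨hs.1.le, hs.2.le.trans hcb.le⟩
    rw [h.integral_eq hc hcb hp, h.integral_zero_left (Set.Ioo_subset_Icc_self hs)] at htotal
    simp only [eq_sub_of_add_eq' htotal]
    ring
  have hdecay : Set.EqOn (fun s => (∫ t in s..b, f t) ^ 2)
      (fun s => (k * M) ^ 2 * ((b - s) / (b - c)) ^ (2 * (p + 1))) (Set.Ioo c b) := fun s hs => by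
    have hx : 0 ≤ (b - s) / (b - c) := div_nonneg (sub_nonneg.2 hs.2.le) (sub_nonneg.2 hcb.le)
    simp only [h.integral_right hcb hp (Set.Ioo_subset_Icc_self hs)]
    rw [mul_pow, mul_comm 2 (p + 1), rpow_mul hx, rpow_two]
  have hexp : -1 < 2 * (p + 1) := by linarith
  rw [integral_eq_add_mul_integral_zero_one hc hcb
      (Continuous.intervalIntegrable (by fun_prop) _ _)
      ((intervalIntegral.intervalIntegrable_rpow' hexp).const_mul _) hplateau hdecay,
    intervalIntegral.integral_const_mul, intervalIntegral.integral_const_mul,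
    intervalIntegral.integral_comp_sub_left (fun x => x ^ 2), integral_pow,
    integral_rpow_zero_left hexp, one_rpow]
  ring

lemma integral_sq_integral_mul (hf : IsPlateauDecay c b p k f) (hg : IsPlateauDecay c b r l g)
    (hc : 0 ≤ c) (hcb : c < b) (hp : -1 < p) (hr : -1 < r) :
    ∫ s in (0 : ℝ)..b, (∫ t in (0 : ℝ)..s, f t) ^ 2 * g s
      = k ^ 2 * l * (c ^ 3 / 3 + (b - c) * ((c + (b - c) / (p + 1)) ^ 2 / (r + 1)
          - 2 * (c + (b - c) / (p + 1)) * ((b - c) / (p + 1)) / (p + r + 2)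
          + ((b - c) / (p + 1)) ^ 2 / (2 * p + r + 3))) := by
  set M := (b - c) / (p + 1)
  have hplateau : Set.EqOn (fun s => (∫ t in (0 : ℝ)..s, f t) ^ 2 * g s)
      (fun s => k ^ 2 * l * s ^ 2) (Set.Ioo 0 c) := fun s hs => by
    simp only [hf.integral_zero_left (Set.Ioo_subset_Icc_self hs),
      hg.eq_const s (Set.Ioo_subset_Icc_self hs)]
    ring
  have hdecay : Set.EqOn (fun s => (∫ t in (0 : ℝ)..s, f t) ^ 2 * g s)
      (fun s => k ^ 2 * l * ((c + M - M * ((b - s) / (b - c)) ^ (p + 1)) ^ 2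
        * ((b - s) / (b - c)) ^ r)) (Set.Ioo c b) := fun s hs => by
    have htotal := hf.integral_add_integral hc hcb hp ⟨hc.trans hs.1.le, hs.2.le⟩
    rw [hf.integral_eq hc hcb hp,
      hf.integral_right hcb hp (Set.Ioo_subset_Icc_self hs)] at htotal
    simp only [eq_sub_of_add_eq htotal, hg.eq_rpow s (Set.Ioo_subset_Icc_self hs)]
    ring
  rw [integral_eq_add_mul_integral_zero_one hc hcb
      (Continuous.intervalIntegrable (by fun_prop) _ _)
      ((intervalIntegrable_sq_sub_rpow_mul_rpow (by linarith) hr (c + M) M 0 1).const_mul _)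
      hplateau hdecay,
    intervalIntegral.integral_const_mul, intervalIntegral.integral_const_mul,
    integral_sq_sub_rpow_mul_rpow (by linarith) hr, integral_pow]
  ring_nf

variable {τ0 τ1 q α τ : ℝ} {φ : ℝ → ℝ}

lemma integral_sq_eq (h : IsPlateauDecay τ0 τ1 q α φ) (hτ0 : 0 ≤ τ0) (hτ01 : τ0 < τ1)
    (hq : -1 / 2 < q) :
    ∫ t in (0 : ℝ)..τ1, φ t ^ 2 = α ^ 2 * ((2 * q * τ0 + τ1) / (2 * q + 1)) := by
  have h2q_one : 2 * q + 1 ≠ 0 := by linarith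
  rw [h.sq.integral_eq hτ0 hτ01 (by linarith)]
  field_simp
  ring

/-- The coefficient of `ν ^ 2` in `c`. -/
lemma remaining_variance_term (h : IsPlateauDecay τ0 τ1 q α φ) (hτ0 : 0 ≤ τ0) (hτ01 : τ0 < τ1)
    (hq : -1 / 2 < q) (hα : α ≠ 0) (hτ : τ = 2 * q * τ0 + τ1) :
    3 / (∫ t in (0 : ℝ)..τ1, φ t ^ 2) ^ 3
        * ∫ s in (0 : ℝ)..τ1, (∫ t in s..τ1, φ t ^ 2) ^ 2
      = (2 * q + 1) ^ 2 / (α ^ 2 * τ ^ 4)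
        * (τ * (2 * τ ^ 3 + τ1 ^ 3 + (4 * q ^ 2 - 2 * q) * τ0 ^ 3 + 6 * q * τ0 ^ 2 * τ1)
          / ((4 * q + 3) * (2 * q + 1))) := by
  have hτne : τ ≠ 0 := by nlinarith
  have h2q_one : 2 * q + 1 ≠ 0 := by linarith
  -- `field_simp` rewrites `4 * q + 3` to this form before looking for a nonvanishing hypothesis.
  have h4q_three : q * 4 + 3 ≠ 0 := by linarith
  rw [h.integral_sq_eq hτ0 hτ01 hq, h.sq.integral_sq_integral_right hτ0 hτ01 (by linarith), ← hτ,
    show 2 * (2 * q) + 3 = 4 * q + 3 by ring]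
  obtain rfl : τ1 = τ - 2 * q * τ0 := by linarith
  field_simp
  ring

/-- The coefficient of `ρ ^ 2 * ν ^ 2` in `c`. -/
lemma correlation_term (h : IsPlateauDecay τ0 τ1 q α φ) (hτ0 : 0 ≤ τ0) (hτ01 : τ0 < τ1)
    (hq : -1 / 2 < q) (hα : α ≠ 0) (hτ : τ = 2 * q * τ0 + τ1) :
    9 / (∫ t in (0 : ℝ)..τ1, φ t ^ 2) ^ 3
        * (∫ s in (0 : ℝ)..τ1, (∫ t in (0 : ℝ)..s, φ t) ^ 2 * φ s ^ 2)
        - 3 * ((2 * q + 1) * (3 * τ ^ 2 + 2 * q * τ0 ^ 2 + τ1 ^ 2)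
          / (2 * τ ^ 2 * (3 * q + 2))) ^ 2 / α ^ 2
      = (2 * q + 1) ^ 2 / (α ^ 2 * τ ^ 4)
        * (3 * q * (τ1 - τ0) ^ 2 * (3 * τ ^ 2 - τ1 ^ 2 + 5 * q * τ0 ^ 2 + 4 * τ0 * τ1)
          / ((4 * q + 3) * (3 * q + 2) ^ 2)) := by
  have hτne : τ ≠ 0 := by nlinarith
  have h2q_one : 2 * q + 1 ≠ 0 := by linarith
  have hq_one : q + 1 ≠ 0 := by linarith
  have h3q_two : q * 3 + 2 ≠ 0 := by linarith
  have h4q_three : q * 4 + 3 ≠ 0 := by linarith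
  rw [h.integral_sq_eq hτ0 hτ01 hq,
    h.integral_sq_integral_mul h.sq hτ0 hτ01 (by linarith) (by linarith), ← hτ,
    show q + 2 * q + 2 = 3 * q + 2 by ring, show 2 * q + 2 * q + 3 = 4 * q + 3 by ring]
  obtain rfl : τ1 = τ - 2 * q * τ0 := by linarith
  field_simp
  ring

end IsPlateauDecay

theorem stmt_9_general (τ0 τ1 q α ν ρ τ γ b : ℝ)
    (hτ0 : 0 ≤ τ0) (hτ01 : τ0 < τ1) (hq : -1 / 2 < q) (hα : α ≠ 0)
    (hτ : τ = 2 * q * τ0 + τ1)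
    (hγ : γ = τ * (2 * τ ^ 3 + τ1 ^ 3 + (4 * q ^ 2 - 2 * q) * τ0 ^ 3 + 6 * q * τ0 ^ 2 * τ1)
            / ((4 * q + 3) * (2 * q + 1))
        + 3 * q * ρ ^ 2 * (τ1 - τ0) ^ 2
            * (3 * τ ^ 2 - τ1 ^ 2 + 5 * q * τ0 ^ 2 + 4 * τ0 * τ1)
            / ((4 * q + 3) * (3 * q + 2) ^ 2))
    (hb : b = ν * ρ / α * (2 * q + 1) * (3 * τ ^ 2 + 2 * q * τ0 ^ 2 + τ1 ^ 2)
            / (2 * τ ^ 2 * (3 * q + 2)))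
    (φ v w : ℝ → ℝ)
    (hφ1 : ∀ t ∈ Set.Icc (0 : ℝ) τ0, φ t = α)
    (hφ2 : ∀ t ∈ Set.Icc τ0 τ1, φ t = α * ((τ1 - t) / (τ1 - τ0)) ^ q)
    (hv : ∀ u, v u = ∫ s in (0 : ℝ)..u, (φ s) ^ 2)
    (hw : ∀ u, w u = ρ * ν * ∫ s in (0 : ℝ)..u, φ s) :
    3 * ν ^ 2 / (v τ1) ^ 3 * (∫ s in (0 : ℝ)..τ1, (v τ1 - v s) ^ 2)
        + 9 / (v τ1) ^ 3 * (∫ s in (0 : ℝ)..τ1, (w s) ^ 2 * (φ s) ^ 2)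
        - 3 * b ^ 2
      = ν ^ 2 / α ^ 2 * γ * (2 * q + 1) ^ 2 / τ ^ 4 := by
  have hφ : IsPlateauDecay τ0 τ1 q α φ := ⟨hφ1, hφ2⟩
  have hremaining : ∫ s in (0 : ℝ)..τ1, (v τ1 - v s) ^ 2
      = ∫ s in (0 : ℝ)..τ1, (∫ t in s..τ1, φ t ^ 2) ^ 2 := by
    refine intervalIntegral.integral_congr fun s hs => ?_
    rw [Set.uIcc_of_le (hτ0.trans hτ01.le)] at hs
    simp only [hv, ← hφ.sq.integral_add_integral hτ0 hτ01 (by linarith) hs, add_sub_cancel_left]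
  have hcovariation : ∫ s in (0 : ℝ)..τ1, (w s) ^ 2 * (φ s) ^ 2
      = (ρ * ν) ^ 2 * ∫ s in (0 : ℝ)..τ1, (∫ t in (0 : ℝ)..s, φ t) ^ 2 * φ s ^ 2 := by
    simp only [hw, mul_pow, mul_assoc, intervalIntegral.integral_const_mul]
  rw [hremaining, hcovariation, hv τ1, hγ, hb]
  linear_combination ν ^ 2 * hφ.remaining_variance_term hτ0 hτ01 hq hα hτ
    + (ρ * ν) ^ 2 * hφ.correlation_term hτ0 hτ01 hq hα hτ

/-- Effective-medium quantity c of Hagan et al. for the backward-looking SABR model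
with τ0 ≥ 0: c = (ν²/α²)γ(2q+1)²/τ⁴. -/
theorem stmt_9 (τ0 τ1 q α ν ρ τ γ b : ℝ)
    (hτ0 : 0 ≤ τ0) (hτ01 : τ0 < τ1) (hq : 0 < q) (hα : 0 < α) (hν : 0 < ν)
    (hρ : ρ ∈ Set.Icc (-1 : ℝ) 1)
    (hτ : τ = 2 * q * τ0 + τ1)
    (hγ : γ = τ * (2 * τ ^ 3 + τ1 ^ 3 + (4 * q ^ 2 - 2 * q) * τ0 ^ 3 + 6 * q * τ0 ^ 2 * τ1)
            / ((4 * q + 3) * (2 * q + 1))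
        + 3 * q * ρ ^ 2 * (τ1 - τ0) ^ 2
            * (3 * τ ^ 2 - τ1 ^ 2 + 5 * q * τ0 ^ 2 + 4 * τ0 * τ1)
            / ((4 * q + 3) * (3 * q + 2) ^ 2))
    (hb : b = ν * ρ / α * (2 * q + 1) * (3 * τ ^ 2 + 2 * q * τ0 ^ 2 + τ1 ^ 2)
            / (2 * τ ^ 2 * (3 * q + 2)))
    (φ v w : ℝ → ℝ)
    (hφ1 : ∀ t ∈ Set.Icc (0 : ℝ) τ0, φ t = α)
    (hφ2 : ∀ t ∈ Set.Icc τ0 τ1, φ t = α * ((τ1 - t) / (τ1 - τ0)) ^ q)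
    (hv : ∀ u, v u = ∫ s in (0:ℝ)..u, (φ s) ^ 2)
    (hw : ∀ u, w u = ρ * ν * ∫ s in (0:ℝ)..u, φ s) :
    3 * ν ^ 2 / (v τ1) ^ 3 * (∫ s in (0:ℝ)..τ1, (v τ1 - v s) ^ 2)
        + 9 / (v τ1) ^ 3 * (∫ s in (0:ℝ)..τ1, (w s) ^ 2 * (φ s) ^ 2)
        - 3 * b ^ 2
      = ν ^ 2 / α ^ 2 * γ * (2 * q + 1) ^ 2 / τ ^ 4 :=
  stmt_9_general τ0 τ1 q α ν ρ τ γ b hτ0 hτ01 (by linarith) hα.ne' hτ hγ hb φ v w hφ1 hφ2 hv hw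
end

section
/- Define b = (νρ/α)·(2q+1)·(3τ² + 2qτ0² + τ1²)/(2τ²·(3q+2)), c = (ν²/α²)·γ·(2q+1)²/τ⁴, Δ² = α²·τ/(τ1·(2q+1)), and G = (ν²/Δ²)·(τ² + 2qτ0² + τ1²)/(2τ1τ(q+1)) − c. Then γ > 0 and c > 0, and the effective SABR parameters of Theorem 2 are obtained: ν̂² := Δ²·c = ν²·γ·(2q+1)/(τ³·τ1); ρ̂ := b/√c = ρ·(3τ² + 2qτ0² + τ1²)/(√γ·(6q+4)); and α̂² := Δ²·exp(Δ²·G·τ1/2) = (α²/(2q+1))·(τ/τ1)·exp(H·τ1/2), where H = ν²·(τ² + 2qτ0² + τ1²)/(2τ1τ(q+1)) − ν̂². -/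
open Real

/-!
For `τ₀ ≤ 3τ₁` the only negative contribution to the first numerator of `γ`, the term `-2qτ₀³`, is
absorbed by `6qτ₀²τ₁`; in the second it is `-τ₁²`, absorbed by `3τ²` because `τ₁ ≤ τ`. Hence
`γ > 0`, and `√c = (ν / α) (2q + 1) √γ / τ²`, so `ν / α` cancels in `b / √c`. Multiplying `G` by
`Δ²` turns its last term `c` into `Δ² c = ν̂²`, so `Δ² G = H`.
-/

namespace BackwardSABR

/-- The quantity `γ` entering the effective vol-of-vol, with the time scale `τ` as an independent
argument (the model takes `τ = 2qτ₀ + τ₁`). -/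
noncomputable def gamma (τ₀ τ₁ q ρ τ : ℝ) : ℝ :=
  τ * (2 * τ ^ 3 + τ₁ ^ 3 + (4 * q ^ 2 - 2 * q) * τ₀ ^ 3 + 6 * q * τ₀ ^ 2 * τ₁)
      / ((4 * q + 3) * (2 * q + 1))
    + 3 * q * ρ ^ 2 * (τ₁ - τ₀) ^ 2
      * (3 * τ ^ 2 - τ₁ ^ 2 + 5 * q * τ₀ ^ 2 + 4 * τ₀ * τ₁)
      / ((4 * q + 3) * (3 * q + 2) ^ 2)

/-- The effective-medium coefficient `b`, from which the effective correlation `b / √c` is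
formed. -/
noncomputable def skew (τ₀ τ₁ q α ν ρ τ : ℝ) : ℝ :=
  ν * ρ / α * (2 * q + 1) * (3 * τ ^ 2 + 2 * q * τ₀ ^ 2 + τ₁ ^ 2) / (2 * τ ^ 2 * (3 * q + 2))

/-- The effective-medium coefficient `c`, from which the effective vol-of-vol `ν̂² = Δ² c` is
formed. -/
noncomputable def curvature (q α ν τ γ : ℝ) : ℝ :=
  ν ^ 2 / α ^ 2 * γ * (2 * q + 1) ^ 2 / τ ^ 4

/-- The effective-medium variance `Δ²`. -/
noncomputable def variance (τ₁ q α τ : ℝ) : ℝ :=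
  α ^ 2 * τ / (τ₁ * (2 * q + 1))

/-- The effective-medium coefficient `G`, which corrects the effective initial volatility through
`α̂² = Δ² exp (Δ² G τ₁ / 2)`. -/
noncomputable def correction (τ₀ τ₁ q α ν τ γ : ℝ) : ℝ :=
  ν ^ 2 / variance τ₁ q α τ * (τ ^ 2 + 2 * q * τ₀ ^ 2 + τ₁ ^ 2) / (2 * τ₁ * τ * (q + 1))
    - curvature q α ν τ γ

variable {τ₀ τ₁ q α ν τ γ : ℝ}

lemma gamma_cubic_pos (hq : 0 ≤ q) (hτ₀ : 0 ≤ τ₀) (hτ₁ : 0 < τ₁) (hτ₀₁ : τ₀ ≤ 3 * τ₁)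
    (hτ : 0 ≤ τ) :
    0 < 2 * τ ^ 3 + τ₁ ^ 3 + (4 * q ^ 2 - 2 * q) * τ₀ ^ 3 + 6 * q * τ₀ ^ 2 * τ₁ := by
  have hgap : 0 ≤ 2 * q * τ₀ ^ 2 * (3 * τ₁ - τ₀) :=
    mul_nonneg (by positivity) (sub_nonneg.2 hτ₀₁)
  calc
    0 < 2 * τ ^ 3 + τ₁ ^ 3 + 4 * q ^ 2 * τ₀ ^ 3 + 2 * q * τ₀ ^ 2 * (3 * τ₁ - τ₀) :=
      add_pos_of_pos_of_nonneg (by positivity) hgap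
    _ = _ := by ring

lemma gamma_quadratic_nonneg (hq : 0 ≤ q) (hτ₀ : 0 ≤ τ₀) (hτ₁ : 0 ≤ τ₁) (hτ : τ₁ ≤ τ) :
    0 ≤ 3 * τ ^ 2 - τ₁ ^ 2 + 5 * q * τ₀ ^ 2 + 4 * τ₀ * τ₁ := by
  have hsq : 0 ≤ τ ^ 2 - τ₁ ^ 2 := sub_nonneg.2 (pow_le_pow_left₀ hτ₁ hτ 2)
  calc
    0 ≤ (τ ^ 2 - τ₁ ^ 2) + 2 * τ ^ 2 + 5 * q * τ₀ ^ 2 + 4 * τ₀ * τ₁ := by positivity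
    _ = _ := by ring

theorem gamma_pos (ρ : ℝ) (hq : 0 ≤ q) (hτ₀ : 0 ≤ τ₀) (hτ₁ : 0 < τ₁) (hτ₀₁ : τ₀ ≤ 3 * τ₁)
    (hτ : τ₁ ≤ τ) : 0 < gamma τ₀ τ₁ q ρ τ := by
  have hτ_pos : 0 < τ := hτ₁.trans_le hτ
  have hcubic := gamma_cubic_pos hq hτ₀ hτ₁ hτ₀₁ hτ_pos.le
  have hquadratic := gamma_quadratic_nonneg hq hτ₀ hτ₁.le hτ
  unfold gamma
  positivity

lemma curvature_pos (hq : 2 * q + 1 ≠ 0) (hα : α ≠ 0) (hν : ν ≠ 0) (hτ : τ ≠ 0) (hγ : 0 < γ) :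
    0 < curvature q α ν τ γ := by
  unfold curvature
  positivity

lemma variance_mul_curvature (hq : 2 * q + 1 ≠ 0) (hα : α ≠ 0) (hτ : τ ≠ 0) :
    variance τ₁ q α τ * curvature q α ν τ γ = ν ^ 2 * γ * (2 * q + 1) / (τ ^ 3 * τ₁) := by
  unfold variance curvature
  field_simp

lemma sqrt_curvature (hq : 0 ≤ 2 * q + 1) (hα : 0 ≤ α) (hν : 0 ≤ ν) :
    √(curvature q α ν τ γ) = ν / α * (2 * q + 1) / τ ^ 2 * √γ := by
  have hsq : curvature q α ν τ γ = (ν / α * (2 * q + 1) / τ ^ 2) ^ 2 * γ := by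
    unfold curvature
    ring
  rw [hsq, sqrt_mul (sq_nonneg _), sqrt_sq (by positivity)]

theorem skew_div_sqrt_curvature (ρ : ℝ) (hq : 0 < 2 * q + 1) (hα : 0 < α) (hν : 0 < ν)
    (hτ : τ ≠ 0) :
    skew τ₀ τ₁ q α ν ρ τ / √(curvature q α ν τ γ)
      = ρ * (3 * τ ^ 2 + 2 * q * τ₀ ^ 2 + τ₁ ^ 2) / (√γ * (6 * q + 4)) := by
  have hden : 6 * q + 4 = 2 * (3 * q + 2) := by ring
  rw [sqrt_curvature hq.le hα.le hν.le, hden]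
  unfold skew
  field_simp

lemma variance_mul_correction (hq : 2 * q + 1 ≠ 0) (hα : α ≠ 0) (hτ₁ : τ₁ ≠ 0) (hτ : τ ≠ 0) :
    variance τ₁ q α τ * correction τ₀ τ₁ q α ν τ γ
      = ν ^ 2 * (τ ^ 2 + 2 * q * τ₀ ^ 2 + τ₁ ^ 2) / (2 * τ₁ * τ * (q + 1))
        - ν ^ 2 * γ * (2 * q + 1) / (τ ^ 3 * τ₁) := by
  have hvariance : variance τ₁ q α τ ≠ 0 := by
    unfold variance
    positivity
  rw [correction, mul_sub, variance_mul_curvature hq hα hτ]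
  field_simp

theorem variance_mul_exp_correction (hq : 2 * q + 1 ≠ 0) (hα : α ≠ 0) (hτ₁ : τ₁ ≠ 0)
    (hτ : τ ≠ 0) :
    variance τ₁ q α τ * exp (variance τ₁ q α τ * correction τ₀ τ₁ q α ν τ γ * τ₁ / 2)
      = α ^ 2 / (2 * q + 1) * (τ / τ₁)
        * exp ((ν ^ 2 * (τ ^ 2 + 2 * q * τ₀ ^ 2 + τ₁ ^ 2) / (2 * τ₁ * τ * (q + 1))
          - ν ^ 2 * γ * (2 * q + 1) / (τ ^ 3 * τ₁)) * τ₁ / 2) := by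
  have hvariance : variance τ₁ q α τ = α ^ 2 / (2 * q + 1) * (τ / τ₁) := by
    unfold variance
    field_simp
  rw [variance_mul_correction hq hα hτ₁ hτ, hvariance]

end BackwardSABR

open BackwardSABR in
theorem stmt_11_general {τ₀ τ₁ q α ν ρ τ γ : ℝ} (hτ₀ : 0 ≤ τ₀) (hτ₁ : 0 < τ₁)
    (hτ₀₁ : τ₀ ≤ 3 * τ₁) (hq : 0 ≤ q) (hα : 0 < α) (hν : 0 < ν)
    (hτ : τ = 2 * q * τ₀ + τ₁) (hγ : γ = gamma τ₀ τ₁ q ρ τ) :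
    0 < γ
    ∧ 0 < curvature q α ν τ γ
    ∧ variance τ₁ q α τ * curvature q α ν τ γ = ν ^ 2 * γ * (2 * q + 1) / (τ ^ 3 * τ₁)
    ∧ skew τ₀ τ₁ q α ν ρ τ / √(curvature q α ν τ γ)
        = ρ * (3 * τ ^ 2 + 2 * q * τ₀ ^ 2 + τ₁ ^ 2) / (√γ * (6 * q + 4))
    ∧ variance τ₁ q α τ * exp (variance τ₁ q α τ * correction τ₀ τ₁ q α ν τ γ * τ₁ / 2)
        = α ^ 2 / (2 * q + 1) * (τ / τ₁)
          * exp ((ν ^ 2 * (τ ^ 2 + 2 * q * τ₀ ^ 2 + τ₁ ^ 2) / (2 * τ₁ * τ * (q + 1))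
            - ν ^ 2 * γ * (2 * q + 1) / (τ ^ 3 * τ₁)) * τ₁ / 2) := by
  have hτ₁_le : τ₁ ≤ τ := hτ ▸ le_add_of_nonneg_left (by positivity)
  have hτ_ne : τ ≠ 0 := (hτ₁.trans_le hτ₁_le).ne'
  have hq' : 0 < 2 * q + 1 := by positivity
  have hγ_pos : 0 < γ := hγ ▸ gamma_pos ρ hq hτ₀ hτ₁ hτ₀₁ hτ₁_le
  exact ⟨hγ_pos, curvature_pos hq'.ne' hα.ne' hν.ne' hτ_ne hγ_pos,
    variance_mul_curvature hq'.ne' hα.ne' hτ_ne,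
    skew_div_sqrt_curvature ρ hq' hα hν hτ_ne,
    variance_mul_exp_correction hq'.ne' hα.ne' hτ₁.ne' hτ_ne⟩

/-- Combining the effective-medium quantities b, c, Δ², G yields the backward-looking
effective SABR parameters of Theorem 2 of the paper (case τ0 ≥ 0):
ν̂² = Δ²c = ν²γ(2q+1)/(τ³τ1), ρ̂ = b/√c = ρ(3τ² + 2qτ0² + τ1²)/(√γ(6q+4)),
α̂² = Δ² exp(Δ²Gτ1/2) = (α²/(2q+1))(τ/τ1) exp(Hτ1/2). -/
theorem stmt_11 (τ0 τ1 q α ν ρ τ γ b c D2 G H : ℝ)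
    (hτ0 : 0 ≤ τ0) (hτ01 : τ0 < τ1) (hq : 0 < q) (hα : 0 < α) (hν : 0 < ν)
    (hρ : ρ ∈ Set.Icc (-1 : ℝ) 1)
    (hτ : τ = 2 * q * τ0 + τ1)
    (hγ : γ = τ * (2 * τ ^ 3 + τ1 ^ 3 + (4 * q ^ 2 - 2 * q) * τ0 ^ 3 + 6 * q * τ0 ^ 2 * τ1)
            / ((4 * q + 3) * (2 * q + 1))
        + 3 * q * ρ ^ 2 * (τ1 - τ0) ^ 2
            * (3 * τ ^ 2 - τ1 ^ 2 + 5 * q * τ0 ^ 2 + 4 * τ0 * τ1)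
            / ((4 * q + 3) * (3 * q + 2) ^ 2))
    (hb : b = ν * ρ / α * (2 * q + 1) * (3 * τ ^ 2 + 2 * q * τ0 ^ 2 + τ1 ^ 2)
            / (2 * τ ^ 2 * (3 * q + 2)))
    (hc : c = ν ^ 2 / α ^ 2 * γ * (2 * q + 1) ^ 2 / τ ^ 4)
    (hD2 : D2 = α ^ 2 * τ / (τ1 * (2 * q + 1)))
    (hG : G = ν ^ 2 / D2 * (τ ^ 2 + 2 * q * τ0 ^ 2 + τ1 ^ 2)
            / (2 * τ1 * τ * (q + 1)) - c)
    (hH : H = ν ^ 2 * (τ ^ 2 + 2 * q * τ0 ^ 2 + τ1 ^ 2) / (2 * τ1 * τ * (q + 1))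
            - ν ^ 2 * γ * (2 * q + 1) / (τ ^ 3 * τ1)) :
    0 < γ
    ∧ 0 < c
    ∧ D2 * c = ν ^ 2 * γ * (2 * q + 1) / (τ ^ 3 * τ1)
    ∧ b / Real.sqrt c
        = ρ * (3 * τ ^ 2 + 2 * q * τ0 ^ 2 + τ1 ^ 2) / (Real.sqrt γ * (6 * q + 4))
    ∧ D2 * Real.exp (D2 * G * τ1 / 2)
        = α ^ 2 / (2 * q + 1) * (τ / τ1) * Real.exp (H * τ1 / 2) := by
  subst hb hc hD2 hG hH
  exact stmt_11_general hτ0 (hτ0.trans_lt hτ01) (by linarith) hq.le hα hν hτ hγ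
end

section
/- As q → ∞, the Theorem 2 effective parameters, viewed as functions of q > 0 with τ0, τ1, α, ν, ρ fixed, satisfy: ρ̂(q) := ρ·(3τ(q)² + 2qτ0² + τ1²)/(√(γ(q))·(6q+4)) → ρ; ν̂²(q) := ν²·γ(q)·(2q+1)/(τ(q)³·τ1) → ν²·τ0/τ1; and α̂²(q) := (α²/(2q+1))·(τ(q)/τ1)·exp(H(q)·τ1/2) → α²·τ0/τ1, where H(q) = ν²·(τ(q)² + 2qτ0² + τ1²)/(2τ1·τ(q)·(q+1)) − ν̂²(q). -/
open Real Filter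

/-!
Every ingredient of the effective parameters behaves like a single power of `q` at infinity:
`τ(q) ∼ 2 τ0 q` and `γ(q) ∼ 4 τ0 ^ 4 q ^ 2`, the `ρ`-dependent part of `γ` being merely bounded.
Substituting these leading terms gives all three limits; in `H` both terms tend to
`ν ^ 2 τ0 / τ1`, so the exponential correction in `α̂²` disappears.
-/

section LeadingTerm

variable {𝕜 : Type*} [Field 𝕜] [LinearOrder 𝕜] [TopologicalSpace 𝕜]

/-- `f x = (c + o(1)) * x ^ n` as `x → ∞`. The coefficient `c` may be `0`, in which case this only
says that `f` is negligible compared with `x ^ n`. -/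
def HasLeadingTerm (f : 𝕜 → 𝕜) (n : ℤ) (c : 𝕜) : Prop :=
  Tendsto (fun x ↦ f x / x ^ n) atTop (nhds c)

theorem hasLeadingTerm_zero_iff {f : 𝕜 → 𝕜} {c : 𝕜} :
    HasLeadingTerm f 0 c ↔ Tendsto f atTop (nhds c) := by
  simp only [HasLeadingTerm, zpow_zero, div_one]

theorem hasLeadingTerm_const (c : 𝕜) : HasLeadingTerm (fun _ ↦ c) 0 c :=
  hasLeadingTerm_zero_iff.2 tendsto_const_nhds

theorem HasLeadingTerm.congr_coeff {f : 𝕜 → 𝕜} {n : ℤ} {a b : 𝕜} (hf : HasLeadingTerm f n a)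
    (h : a = b) : HasLeadingTerm f n b :=
  h ▸ hf

variable [IsStrictOrderedRing 𝕜]

theorem hasLeadingTerm_id : HasLeadingTerm (fun x : 𝕜 ↦ x) 1 1 := by
  refine tendsto_const_nhds.congr' ?_
  filter_upwards [eventually_ne_atTop 0] with x hx
  rw [zpow_one, div_self hx]

namespace HasLeadingTerm

variable {f g : 𝕜 → 𝕜} {m n : ℤ} {a b : 𝕜} [OrderTopology 𝕜]

theorem add (hf : HasLeadingTerm f n a) (hg : HasLeadingTerm g n b) :
    HasLeadingTerm (fun x ↦ f x + g x) n (a + b) := by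
  simpa only [HasLeadingTerm, add_div] using Tendsto.add hf hg

theorem sub (hf : HasLeadingTerm f n a) (hg : HasLeadingTerm g n b) :
    HasLeadingTerm (fun x ↦ f x - g x) n (a - b) := by
  simpa only [HasLeadingTerm, sub_div] using Tendsto.sub hf hg

theorem mul (hf : HasLeadingTerm f m a) (hg : HasLeadingTerm g n b) :
    HasLeadingTerm (fun x ↦ f x * g x) (m + n) (a * b) := by
  refine (Tendsto.mul hf hg).congr' ?_
  filter_upwards [eventually_ne_atTop 0] with x hx
  rw [zpow_add₀ hx, div_mul_div_comm]

theorem div (hf : HasLeadingTerm f m a) (hg : HasLeadingTerm g n b) (hb : b ≠ 0) :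
    HasLeadingTerm (fun x ↦ f x / g x) (m - n) (a / b) := by
  refine (Tendsto.div hf hg hb).congr' ?_
  filter_upwards [eventually_ne_atTop 0] with x hx
  rw [Pi.div_apply, zpow_sub₀ hx, div_div_div_comm]

theorem pow (hf : HasLeadingTerm f n a) (k : ℕ) :
    HasLeadingTerm (fun x ↦ f x ^ k) (n * k) (a ^ k) := by
  simpa only [HasLeadingTerm, zpow_mul, zpow_natCast, div_pow] using Tendsto.pow hf k

theorem const_mul (hf : HasLeadingTerm f n a) (c : 𝕜) :
    HasLeadingTerm (fun x ↦ c * f x) n (c * a) := by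
  simpa only [HasLeadingTerm, mul_div_assoc] using Tendsto.const_mul c hf

theorem mul_const (hf : HasLeadingTerm f n a) (c : 𝕜) :
    HasLeadingTerm (fun x ↦ f x * c) n (a * c) := by
  simpa only [mul_comm] using hf.const_mul c

theorem of_lt (hf : HasLeadingTerm f m a) (hmn : m < n) : HasLeadingTerm f n 0 := by
  have hpow : Tendsto (fun x : 𝕜 ↦ x ^ (m - n)) atTop (nhds 0) :=
    tendsto_zpow_atTop_zero (sub_neg.2 hmn)
  refine (mul_zero a ▸ Tendsto.mul hf hpow).congr' ?_
  filter_upwards [eventually_ne_atTop 0] with x hx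
  rw [zpow_sub₀ hx, div_mul_div_cancel₀ (zpow_ne_zero m hx)]

theorem add_of_lt (hf : HasLeadingTerm f n a) (hg : HasLeadingTerm g m b) (hmn : m < n) :
    HasLeadingTerm (fun x ↦ f x + g x) n a := by
  simpa only [add_zero] using hf.add (hg.of_lt hmn)

theorem sub_of_lt (hf : HasLeadingTerm f n a) (hg : HasLeadingTerm g m b) (hmn : m < n) :
    HasLeadingTerm (fun x ↦ f x - g x) n a := by
  simpa only [sub_zero] using hf.sub (hg.of_lt hmn)

theorem sqrt {f : ℝ → ℝ} {a : ℝ} (hf : HasLeadingTerm f (n * 2) a) :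
    HasLeadingTerm (fun x ↦ √(f x)) n √a := by
  refine (Tendsto.sqrt hf).congr' ?_
  filter_upwards [eventually_ge_atTop 0] with x hx
  rw [zpow_mul, zpow_ofNat, Real.sqrt_div' _ (sq_nonneg _), Real.sqrt_sq (zpow_nonneg hx n)]

end HasLeadingTerm

theorem hasLeadingTerm_linear [OrderTopology 𝕜] (a b : 𝕜) :
    HasLeadingTerm (fun x ↦ a * x + b) 1 a :=
  ((hasLeadingTerm_id.const_mul a).add_of_lt (hasLeadingTerm_const b) (by decide)).congr_coeff
    (mul_one a)

end LeadingTerm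

section EffectiveParameters

/-- The weighted time `τ(q)` on which all the effective parameters depend. -/
def sabrTau (τ0 τ1 q : ℝ) : ℝ :=
  2 * q * τ0 + τ1

/-- The quantity `γ(q)` shared by the effective correlation and volatility of volatility. -/
noncomputable def sabrGamma (τ0 τ1 ρ q : ℝ) : ℝ :=
  sabrTau τ0 τ1 q * (2 * sabrTau τ0 τ1 q ^ 3 + τ1 ^ 3 + (4 * q ^ 2 - 2 * q) * τ0 ^ 3
      + 6 * q * τ0 ^ 2 * τ1) / ((4 * q + 3) * (2 * q + 1))
    + 3 * q * ρ ^ 2 * (τ1 - τ0) ^ 2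
      * (3 * sabrTau τ0 τ1 q ^ 2 - τ1 ^ 2 + 5 * q * τ0 ^ 2 + 4 * τ0 * τ1)
      / ((4 * q + 3) * (3 * q + 2) ^ 2)

/-- The effective correlation `ρ̂(q)`. -/
noncomputable def sabrRhoHat (τ0 τ1 ρ q : ℝ) : ℝ :=
  ρ * (3 * sabrTau τ0 τ1 q ^ 2 + 2 * q * τ0 ^ 2 + τ1 ^ 2)
    / (√(sabrGamma τ0 τ1 ρ q) * (6 * q + 4))

/-- The square `ν̂²(q)` of the effective volatility of volatility. -/
noncomputable def sabrNuHatSq (τ0 τ1 ν ρ q : ℝ) : ℝ :=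
  ν ^ 2 * sabrGamma τ0 τ1 ρ q * (2 * q + 1) / (sabrTau τ0 τ1 q ^ 3 * τ1)

/-- The rate `H(q)` of the exponential correction in `α̂²(q)`. -/
noncomputable def sabrH (τ0 τ1 ν ρ q : ℝ) : ℝ :=
  ν ^ 2 * (sabrTau τ0 τ1 q ^ 2 + 2 * q * τ0 ^ 2 + τ1 ^ 2) / (2 * τ1 * sabrTau τ0 τ1 q * (q + 1))
    - sabrNuHatSq τ0 τ1 ν ρ q

/-- The square `α̂²(q)` of the effective initial volatility. -/
noncomputable def sabrAlphaHatSq (τ0 τ1 α ν ρ q : ℝ) : ℝ :=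
  α ^ 2 / (2 * q + 1) * (sabrTau τ0 τ1 q / τ1) * Real.exp (sabrH τ0 τ1 ν ρ q * τ1 / 2)

variable {τ0 τ1 : ℝ}

theorem hasLeadingTerm_sabrTau (τ0 τ1 : ℝ) : HasLeadingTerm (sabrTau τ0 τ1) 1 (2 * τ0) :=
  (((hasLeadingTerm_id.const_mul 2).mul_const τ0).add_of_lt (hasLeadingTerm_const τ1)
    (by decide)).congr_coeff (by ring)

theorem hasLeadingTerm_const_mul_sabrTau_sq_add (k τ0 τ1 : ℝ) :
    HasLeadingTerm (fun q ↦ k * sabrTau τ0 τ1 q ^ 2 + 2 * q * τ0 ^ 2 + τ1 ^ 2) 2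
      (k * (2 * τ0) ^ 2) :=
  ((((hasLeadingTerm_sabrTau τ0 τ1).pow 2).const_mul k).add_of_lt
      ((hasLeadingTerm_id.const_mul 2).mul_const _) (by decide)).add_of_lt
    (hasLeadingTerm_const _) (by decide)

theorem hasLeadingTerm_sabrGamma (τ0 τ1 ρ : ℝ) :
    HasLeadingTerm (sabrGamma τ0 τ1 ρ) 2 ((2 * τ0 ^ 2) ^ 2) := by
  have hτ := hasLeadingTerm_sabrTau τ0 τ1
  have hid : HasLeadingTerm (fun q : ℝ ↦ q) 1 1 := hasLeadingTerm_id
  have hcubic : HasLeadingTerm (fun q ↦ 2 * sabrTau τ0 τ1 q ^ 3 + τ1 ^ 3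
      + (4 * q ^ 2 - 2 * q) * τ0 ^ 3 + 6 * q * τ0 ^ 2 * τ1) 3 (2 * (2 * τ0) ^ 3) :=
    ((((hτ.pow 3).const_mul 2).add_of_lt (hasLeadingTerm_const _) (by decide)).add_of_lt
        ((((hid.pow 2).const_mul 4).sub_of_lt (hid.const_mul 2) (by decide)).mul_const _)
        (by decide)).add_of_lt
      (((hid.const_mul 6).mul_const _).mul_const _) (by decide)
  have hquadratic : HasLeadingTerm (fun q ↦ 3 * sabrTau τ0 τ1 q ^ 2 - τ1 ^ 2
      + 5 * q * τ0 ^ 2 + 4 * τ0 * τ1) 2 (3 * (2 * τ0) ^ 2) :=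
    ((((hτ.pow 2).const_mul 3).sub_of_lt (hasLeadingTerm_const _) (by decide)).add_of_lt
        ((hid.const_mul 5).mul_const _) (by decide)).add_of_lt
      (hasLeadingTerm_const _) (by decide)
  have hmain := (hτ.mul hcubic).div
    ((hasLeadingTerm_linear 4 3).mul (hasLeadingTerm_linear 2 1)) (by norm_num)
  have hcorrelation :=
    ((((hid.const_mul 3).mul_const (ρ ^ 2)).mul_const ((τ1 - τ0) ^ 2)).mul hquadratic).div
      ((hasLeadingTerm_linear 4 3).mul ((hasLeadingTerm_linear 3 2).pow 2)) (by norm_num)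
  exact (hmain.add_of_lt hcorrelation (by decide)).congr_coeff (by ring)

theorem tendsto_sabrRhoHat (hτ0 : τ0 ≠ 0) (τ1 ρ : ℝ) :
    Tendsto (sabrRhoHat τ0 τ1 ρ) atTop (nhds ρ) := by
  have hnum := (hasLeadingTerm_const_mul_sabrTau_sq_add 3 τ0 τ1).const_mul ρ
  have hsqrt : HasLeadingTerm (fun q ↦ √(sabrGamma τ0 τ1 ρ q)) 1 (2 * τ0 ^ 2) :=
    (hasLeadingTerm_sabrGamma τ0 τ1 ρ).sqrt.congr_coeff (Real.sqrt_sq (by positivity))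
  have hden := hsqrt.mul (hasLeadingTerm_linear 6 4)
  refine hasLeadingTerm_zero_iff.1 ((hnum.div hden (by positivity)).congr_coeff ?_)
  field_simp
  ring

theorem tendsto_sabrNuHatSq (hτ0 : τ0 ≠ 0) (hτ1 : τ1 ≠ 0) (ν ρ : ℝ) :
    Tendsto (sabrNuHatSq τ0 τ1 ν ρ) atTop (nhds (ν ^ 2 * τ0 / τ1)) := by
  have hnum := ((hasLeadingTerm_sabrGamma τ0 τ1 ρ).const_mul (ν ^ 2)).mul
    (hasLeadingTerm_linear 2 1)
  have hden := ((hasLeadingTerm_sabrTau τ0 τ1).pow 3).mul_const τ1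
  refine hasLeadingTerm_zero_iff.1 ((hnum.div hden (by positivity)).congr_coeff ?_)
  field_simp

theorem tendsto_sabrH (hτ0 : τ0 ≠ 0) (hτ1 : τ1 ≠ 0) (ν ρ : ℝ) :
    Tendsto (sabrH τ0 τ1 ν ρ) atTop (nhds 0) := by
  have hnum : HasLeadingTerm
      (fun q ↦ ν ^ 2 * (sabrTau τ0 τ1 q ^ 2 + 2 * q * τ0 ^ 2 + τ1 ^ 2)) 2
      (ν ^ 2 * (2 * τ0) ^ 2) := by
    simpa only [one_mul] using (hasLeadingTerm_const_mul_sabrTau_sq_add 1 τ0 τ1).const_mul (ν ^ 2)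
  have hden := ((hasLeadingTerm_sabrTau τ0 τ1).const_mul (2 * τ1)).mul
    (hasLeadingTerm_id.add_of_lt (hasLeadingTerm_const 1) (by decide))
  have hquot := (hnum.div hden (by positivity)).congr_coeff
    (b := ν ^ 2 * τ0 / τ1) (by field_simp)
  exact sub_self (ν ^ 2 * τ0 / τ1) ▸
    (hasLeadingTerm_zero_iff.1 hquot).sub (tendsto_sabrNuHatSq hτ0 hτ1 ν ρ)

theorem tendsto_sabrAlphaHatSq (hτ0 : τ0 ≠ 0) (hτ1 : τ1 ≠ 0) (α ν ρ : ℝ) :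
    Tendsto (sabrAlphaHatSq τ0 τ1 α ν ρ) atTop (nhds (α ^ 2 * τ0 / τ1)) := by
  have hprefactor : HasLeadingTerm (fun q ↦ α ^ 2 / (2 * q + 1) * (sabrTau τ0 τ1 q / τ1)) 0
      (α ^ 2 * τ0 / τ1) :=
    (((hasLeadingTerm_const _).div (hasLeadingTerm_linear 2 1) two_ne_zero).mul
      ((hasLeadingTerm_sabrTau τ0 τ1).div (hasLeadingTerm_const τ1) hτ1)).congr_coeff (by ring)
  have hexp : Tendsto (fun q ↦ Real.exp (sabrH τ0 τ1 ν ρ q * τ1 / 2)) atTop (nhds 1) := by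
    simpa only [zero_mul, zero_div, Real.exp_zero] using
      (((tendsto_sabrH hτ0 hτ1 ν ρ).mul_const τ1).div_const 2).rexp
  exact mul_one (α ^ 2 * τ0 / τ1) ▸ (hasLeadingTerm_zero_iff.1 hprefactor).mul hexp

theorem stmt_14_general (hτ0 : τ0 ≠ 0) (hτ1 : τ1 ≠ 0) (α ν ρ : ℝ) :
    Tendsto (sabrRhoHat τ0 τ1 ρ) atTop (nhds ρ)
    ∧ Tendsto (sabrNuHatSq τ0 τ1 ν ρ) atTop (nhds (ν ^ 2 * τ0 / τ1))
    ∧ Tendsto (sabrAlphaHatSq τ0 τ1 α ν ρ) atTop (nhds (α ^ 2 * τ0 / τ1)) :=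
  ⟨tendsto_sabrRhoHat hτ0 τ1 ρ, tendsto_sabrNuHatSq hτ0 hτ1 ν ρ,
    tendsto_sabrAlphaHatSq hτ0 hτ1 α ν ρ⟩

end EffectiveParameters

/-- Limits as q → ∞ of the Theorem 2 effective SABR parameters:
ρ̂(q) → ρ, ν̂²(q) → ν²τ0/τ1, α̂²(q) → α²τ0/τ1. -/
theorem stmt_14 (τ0 τ1 α ν ρ : ℝ)
    (hτ0 : 0 < τ0) (hτ01 : τ0 < τ1) (hα : 0 < α) (hν : 0 < ν)
    (hρ : ρ ∈ Set.Icc (-1 : ℝ) 1)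
    (τ γ νh2 H ρh αh2 : ℝ → ℝ)
    (hτ : ∀ q, τ q = 2 * q * τ0 + τ1)
    (hγ : ∀ q, γ q = τ q * (2 * (τ q) ^ 3 + τ1 ^ 3 + (4 * q ^ 2 - 2 * q) * τ0 ^ 3
              + 6 * q * τ0 ^ 2 * τ1) / ((4 * q + 3) * (2 * q + 1))
        + 3 * q * ρ ^ 2 * (τ1 - τ0) ^ 2
            * (3 * (τ q) ^ 2 - τ1 ^ 2 + 5 * q * τ0 ^ 2 + 4 * τ0 * τ1)
            / ((4 * q + 3) * (3 * q + 2) ^ 2))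
    (hνh2 : ∀ q, νh2 q = ν ^ 2 * γ q * (2 * q + 1) / ((τ q) ^ 3 * τ1))
    (hH : ∀ q, H q = ν ^ 2 * ((τ q) ^ 2 + 2 * q * τ0 ^ 2 + τ1 ^ 2)
            / (2 * τ1 * (τ q) * (q + 1)) - νh2 q)
    (hρh : ∀ q, ρh q = ρ * (3 * (τ q) ^ 2 + 2 * q * τ0 ^ 2 + τ1 ^ 2)
            / (Real.sqrt (γ q) * (6 * q + 4)))
    (hαh2 : ∀ q, αh2 q = α ^ 2 / (2 * q + 1) * (τ q / τ1) * Real.exp (H q * τ1 / 2)) :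
    Tendsto ρh atTop (nhds ρ)
    ∧ Tendsto νh2 atTop (nhds (ν ^ 2 * τ0 / τ1))
    ∧ Tendsto αh2 atTop (nhds (α ^ 2 * τ0 / τ1)) := by
  rcases funext hαh2, funext hρh, funext hH, funext hνh2, funext hγ, funext hτ with
    ⟨rfl, rfl, rfl, rfl, rfl, rfl⟩
  exact stmt_14_general hτ0.ne' (hτ0.trans hτ01).ne' α ν ρ
end
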